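/- arXiv:1011.4691 — 3 statements merged into one kernel-verified Lean document; each statement's English description precedes it below -/
import Mathlib

section
/- Let K ⊂ ℝ² be a nonempty compact set. There is no twice continuously differentiable function u : ℝ² \ K → ℝ such that u > 0 and −Δu ≥ 0 on ℝ² \ K and u(x) → 0 as |x| → ∞. In other words, in dimension N = 2 there is no positive superharmonic ground state in the exterior of a compact set. -/
open Metric Set MeasureTheory Filter

noncomputable def laplacian {N : ℕ} (u : EuclideanSpace ℝ (Fin N) → ℝ)
    (x : EuclideanSpace ℝ (Fin N)) : ℝ :=
  ∑ i, iteratedFDeriv ℝ 2 u x ![EuclideanSpace.single i 1, EuclideanSpace.single i 1]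

lemma aux_second_deriv {f g : ℝ → ℝ} {c : ℝ} (hmin : IsLocalMin f 0)
    (hf : ∀ᶠ t in nhds (0:ℝ), HasDerivAt f (g t) t) (hg : HasDerivAt g c 0) : 0 ≤ c := by
  by_contra hc
  push Not at hc
  have h1 : deriv f =ᶠ[nhds 0] g := hf.mono fun t ht => ht.deriv
  have h2 : deriv (deriv f) 0 = c := by rw [h1.deriv_eq, hg.deriv]
  have hmax : IsLocalMax f 0 :=
    isLocalMax_of_deriv_deriv_neg (by rw [h2]; exact hc) hmin.deriv_eq_zero
      hf.self_of_nhds.continuousAt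
  have h3 : f =ᶠ[nhds 0] fun _ => f 0 := by
    filter_upwards [hmin, hmax] with t a b using le_antisymm b a
  have h4 : deriv f =ᶠ[nhds 0] fun _ => (0:ℝ) := by
    have := h3.deriv
    simpa using this
  have h5 : deriv (deriv f) 0 = 0 := by rw [h4.deriv_eq]; simp
  linarith

lemma aux_line {E : Type*} [NormedAddCommGroup E] [NormedSpace ℝ E] {u : E → ℝ} {p e : E}
    (hu : ContDiffAt ℝ 2 u p) :
    (∀ᶠ t in nhds (0:ℝ), HasDerivAt (fun t : ℝ => u (p + t • e)) (fderiv ℝ u (p + t • e) e) t) ∧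
    HasDerivAt (fun t : ℝ => fderiv ℝ u (p + t • e) e) (iteratedFDeriv ℝ 2 u p ![e, e]) 0 := by
  have hl : ∀ t : ℝ, HasDerivAt (fun t : ℝ => p + t • e) e t := fun t => by
    simpa using ((hasDerivAt_id t).smul_const e).const_add p
  have hc : Tendsto (fun t : ℝ => p + t • e) (nhds 0) (nhds p) := by
    simpa using (hl 0).continuousAt.tendsto
  constructor
  · have h := (hu.eventually (by simp)).mono fun y hy => hy.differentiableAt (by norm_num)
    filter_upwards [hc.eventually h] with t ht
    exact ht.hasFDerivAt.comp_hasDerivAt t (hl t)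
  · have h : DifferentiableAt ℝ (fderiv ℝ u) p :=
      (hu.fderiv_right (m := 1) (by norm_num)).differentiableAt (by norm_num)
    have h' : HasFDerivAt (fderiv ℝ u) (fderiv ℝ (fderiv ℝ u) p) (p + (0:ℝ) • e) := by
      simpa using h.hasFDerivAt
    have h1 : HasDerivAt (fun t : ℝ => fderiv ℝ u (p + t • e)) (fderiv ℝ (fderiv ℝ u) p e) 0 :=
      HasFDerivAt.comp_hasDerivAt (0:ℝ) h' (hl 0)
    have h2 : HasDerivAt (fun t : ℝ => fderiv ℝ u (p + t • e) e)
        (fderiv ℝ (fderiv ℝ u) p e e) 0 :=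
      ((ContinuousLinearMap.apply ℝ ℝ e).hasFDerivAt).comp_hasDerivAt (0:ℝ) h1
    rw [iteratedFDeriv_two_apply]
    exact h2

lemma aux_log {a b : ℝ} (ha : 0 < a) :
    (∀ᶠ t in nhds (0:ℝ), HasDerivAt (fun t : ℝ => Real.log (a + 2 * t * b + t ^ 2))
      ((2 * b + 2 * t) / (a + 2 * t * b + t ^ 2)) t) ∧
    HasDerivAt (fun t : ℝ => (2 * b + 2 * t) / (a + 2 * t * b + t ^ 2))
      (2 / a - 4 * b ^ 2 / a ^ 2) 0 := by
  have hq : ∀ t : ℝ, HasDerivAt (fun t : ℝ => a + 2 * t * b + t ^ 2) (2 * b + 2 * t) t := by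
    intro t
    have h := ((((hasDerivAt_id t).const_mul 2).mul_const b).const_add a).add (hasDerivAt_pow 2 t)
    refine HasDerivAt.congr_deriv h ?_
    simp
  constructor
  · have : ∀ᶠ t in nhds (0:ℝ), a + 2 * t * b + t ^ 2 ≠ 0 := by
      apply (hq 0).continuousAt.eventually_ne
      simpa using ha.ne'
    filter_upwards [this] with t ht using (hq t).log ht
  · have h := (((hasDerivAt_id (0:ℝ)).const_mul 2).const_add (2 * b)).div (hq 0) (by simpa using ha.ne')
    refine HasDerivAt.congr_deriv h ?_
    simp only [id, mul_zero, zero_mul, add_zero, mul_one, ne_eq, OfNat.ofNat_ne_zero,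
      not_false_eq_true, zero_pow]
    field_simp
    ring

lemma aux_min {u : EuclideanSpace ℝ (Fin 2) → ℝ} {p : EuclideanSpace ℝ (Fin 2)} {ε : ℝ}
    (hε : 0 < ε) (hp : 1 < ‖p‖) (hu : ContDiffAt ℝ 2 u p) (hlap : 0 ≤ -laplacian u p)
    (hmin : IsLocalMin (fun x => u x + ε * Real.log (‖x‖ ^ 2 - 1)) p) : False := by
  have ha : 0 < ‖p‖ ^ 2 - 1 := by nlinarith
  have key : ∀ i : Fin 2, 0 ≤ iteratedFDeriv ℝ 2 u p
      ![EuclideanSpace.single i 1, EuclideanSpace.single i 1] +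
      ε * (2 / (‖p‖ ^ 2 - 1) - 4 * (p i) ^ 2 / (‖p‖ ^ 2 - 1) ^ 2) := by
    intro i
    set e : EuclideanSpace ℝ (Fin 2) := EuclideanSpace.single i 1 with he
    obtain ⟨h1, h2⟩ := aux_line (e := e) hu
    obtain ⟨h3, h4⟩ := aux_log (b := p i) ha
    refine aux_second_deriv (f := fun t : ℝ => u (p + t • e) +
      ε * Real.log (‖p‖ ^ 2 - 1 + 2 * t * p i + t ^ 2)) ?_ ?_ (h2.add (h4.const_mul ε))
    · have hc : Tendsto (fun t : ℝ => p + t • e) (nhds 0) (nhds p) := by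
        have : Continuous (fun t : ℝ => p + t • e) := by fun_prop
        simpa using this.tendsto 0
      have hn : ∀ t : ℝ, ‖p + t • e‖ ^ 2 - 1 = ‖p‖ ^ 2 - 1 + 2 * t * p i + t ^ 2 := by
        intro t
        rw [norm_add_sq_real, norm_smul, inner_smul_right]
        simp [he, EuclideanSpace.inner_single_right]
        ring
      filter_upwards [hc.eventually hmin] with t ht
      simp only [hn] at ht
      simpa using ht
    · filter_upwards [h1, h3] with t a b using a.add (b.const_mul ε)
  have k0 := key 0
  have k1 := key 1
  have hs : ‖p‖ ^ 2 = p 0 ^ 2 + p 1 ^ 2 := by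
    rw [EuclideanSpace.norm_sq_eq]; simp [Fin.sum_univ_two]
  simp only [laplacian, Fin.sum_univ_two] at hlap
  have hneg : (2 / (‖p‖ ^ 2 - 1) - 4 * (p 0) ^ 2 / (‖p‖ ^ 2 - 1) ^ 2) +
      (2 / (‖p‖ ^ 2 - 1) - 4 * (p 1) ^ 2 / (‖p‖ ^ 2 - 1) ^ 2) < 0 := by
    have : (2 / (‖p‖ ^ 2 - 1) - 4 * (p 0) ^ 2 / (‖p‖ ^ 2 - 1) ^ 2) +
      (2 / (‖p‖ ^ 2 - 1) - 4 * (p 1) ^ 2 / (‖p‖ ^ 2 - 1) ^ 2) = -4 / (‖p‖ ^ 2 - 1) ^ 2 := by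
      field_simp
      rw [hs]; ring
    rw [this]
    apply div_neg_of_neg_of_pos <;> [norm_num; positivity]
  nlinarith

lemma aux_main {u : EuclideanSpace ℝ (Fin 2) → ℝ} {R m ε : ℝ} (hε : 0 < ε) (hR : 2 ≤ R)
    (hu : ∀ x, R ≤ ‖x‖ → ContDiffAt ℝ 2 u x ∧ 0 < u x ∧ 0 ≤ -laplacian u x)
    (hm : ∀ x, ‖x‖ = R → m ≤ u x) (x : EuclideanSpace ℝ (Fin 2)) (hx : R ≤ ‖x‖) :
    m ≤ u x + ε * Real.log (‖x‖ ^ 2 - 1) := by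
  by_contra hlt
  push Not at hlt
  set w : EuclideanSpace ℝ (Fin 2) → ℝ := fun x => u x + ε * Real.log (‖x‖ ^ 2 - 1) with hw
  have hinf : Tendsto (fun x : EuclideanSpace ℝ (Fin 2) => ε * Real.log (‖x‖ ^ 2 - 1))
      (cocompact _) atTop := by
    apply Tendsto.const_mul_atTop hε
    apply Real.tendsto_log_atTop.comp
    apply tendsto_atTop_add_const_right
    exact (tendsto_pow_atTop (by norm_num)).comp (tendsto_norm_cocompact_atTop)
  have hcl : IsClosed {y : EuclideanSpace ℝ (Fin 2) | R ≤ ‖y‖} :=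
    isClosed_le continuous_const continuous_norm
  have hcont : ContinuousOn w {y | R ≤ ‖y‖} := by
    intro y hy
    have hy' : R ≤ ‖y‖ := hy
    apply ContinuousAt.continuousWithinAt
    refine (hu y hy).1.continuousAt.add (continuousAt_const.mul (ContinuousAt.log ?_ ?_))
    · fun_prop
    · nlinarith
  obtain ⟨p, hpR, hp⟩ := hcont.exists_isMinOn' hcl hx (by
    have h1 := (hinf.eventually_ge_atTop (w x)).filter_mono
      (inf_le_left : cocompact _ ⊓ 𝓟 {y | R ≤ ‖y‖} ≤ _)
    have h2 : ∀ᶠ y in cocompact _ ⊓ 𝓟 {y : EuclideanSpace ℝ (Fin 2) | R ≤ ‖y‖}, R ≤ ‖y‖ :=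
      (eventually_principal.2 fun y hy => hy).filter_mono inf_le_right
    filter_upwards [h1, h2] with y a b
    have := (hu y b).2.1
    simp only [hw] at a ⊢
    linarith)
  have hpx : w p ≤ w x := hp hx
  have hpR' : R ≤ ‖p‖ := hpR
  have hpgt : R < ‖p‖ := by
    refine lt_of_le_of_ne hpR' fun h => ?_
    have h1 := hm p h.symm
    have h2 : 0 ≤ Real.log (‖p‖ ^ 2 - 1) := Real.log_nonneg (by nlinarith)
    have h3 := mul_nonneg hε.le h2
    simp only [hw] at hpx
    linarith
  refine aux_min hε (by linarith) (hu p hpR').1 (hu p hpR').2.2 ?_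
  exact hp.isLocalMin (mem_of_superset ((isOpen_lt continuous_const continuous_norm).mem_nhds hpgt)
    fun y (hy : R < ‖y‖) => hy.le)

/-- Remark after Theorem 3.4: in dimension two there is no positive superharmonic
ground state in the exterior of a compact set. -/
theorem statement_7 (K : Set (EuclideanSpace ℝ (Fin 2))) (hK : IsCompact K)
    (hKne : K.Nonempty) :
    ¬ ∃ u : EuclideanSpace ℝ (Fin 2) → ℝ,
        ContDiffOn ℝ 2 u Kᶜ ∧
        (∀ x ∈ Kᶜ, 0 < u x ∧ 0 ≤ -laplacian u x) ∧
        Tendsto u (Filter.cocompact (EuclideanSpace ℝ (Fin 2))) (nhds 0) := by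
  rintro ⟨u, hC, hpos, hlim⟩
  obtain ⟨R₀, hR₀⟩ := hK.isBounded.exists_norm_le
  set R : ℝ := max (R₀ + 1) 2 with hRdef
  have hR2 : 2 ≤ R := le_max_right _ _
  have hR1 : R₀ + 1 ≤ R := le_max_left _ _
  have hmem : ∀ x : EuclideanSpace ℝ (Fin 2), R ≤ ‖x‖ → x ∈ Kᶜ := by
    intro x hx hxK
    have := hR₀ x hxK
    linarith
  have hu : ∀ x, R ≤ ‖x‖ → ContDiffAt ℝ 2 u x ∧ 0 < u x ∧ 0 ≤ -laplacian u x := fun x hx =>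
    ⟨hC.contDiffAt (hK.isClosed.isOpen_compl.mem_nhds (hmem x hx)), hpos x (hmem x hx)⟩
  obtain ⟨q, hq, hqmin⟩ := (isCompact_sphere (0 : EuclideanSpace ℝ (Fin 2)) R).exists_isMinOn
    (f := u) (NormedSpace.sphere_nonempty.2 (by linarith))
    (fun x hx => (hu x (by simpa using (mem_sphere_zero_iff_norm.1 hx).ge)).1.continuousAt.continuousWithinAt)
  have hqn : ‖q‖ = R := by simpa using hq
  have hm0 : 0 < u q := (hu q hqn.ge).2.1
  have hge : ∀ x, R ≤ ‖x‖ → u q ≤ u x := by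
    intro x hx
    have hL : 0 ≤ Real.log (‖x‖ ^ 2 - 1) := Real.log_nonneg (by nlinarith)
    refine le_of_forall_pos_le_add fun δ hδ => ?_
    have h := aux_main (ε := δ / (Real.log (‖x‖ ^ 2 - 1) + 1)) (by positivity) hR2 hu
      (m := u q) (fun y hy => hqmin (by simpa using hy)) x hx
    have h2 : δ / (Real.log (‖x‖ ^ 2 - 1) + 1) * Real.log (‖x‖ ^ 2 - 1) ≤ δ := by
      rw [div_mul_eq_mul_div, div_le_iff₀ (by positivity)]
      nlinarith
    linarith
  have hev : ∀ᶠ x in cocompact (EuclideanSpace ℝ (Fin 2)), u x < u q ∧ R ≤ ‖x‖ :=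
    (hlim.eventually_lt_const hm0).and
      ((tendsto_norm_cocompact_atTop).eventually_ge_atTop R)
  obtain ⟨x, h1, h2⟩ := hev.exists
  linarith [hge x h2]
end

section
/- Let N ≥ 3, r > 0 and x ∈ ℝ^N with |x| ≠ r. Then (1/(σ_N r^{N−1})) ∫_{∂B_r(0)} |x − y|^{2−N} dσ(y) equals |x|^{2−N} if |x| > r, and equals r^{2−N} if |x| < r. -/
open Metric Set MeasureTheory Filter

/-- Differentiation under the integral sign over a compact set of finite measure. -/
theorem hasDerivAt_setIntegral_compact {E : Type*} [TopologicalSpace E] [T2Space E]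
    [MeasurableSpace E] [BorelSpace E]
    {μ : Measure E} {K : Set E} (hK : IsCompact K) (hμ : μ K ≠ ⊤) {U : Set ℝ} (hU : IsOpen U)
    {F F' : ℝ → E → ℝ}
    (hF : ∀ s ∈ U, ContinuousOn (F s) K)
    (hF' : ContinuousOn (fun p : ℝ × E => F' p.1 p.2) (U ×ˢ K))
    (hd : ∀ s ∈ U, ∀ y ∈ K, HasDerivAt (fun u => F u y) (F' s y) s) {s : ℝ} (hs : s ∈ U) :
    HasDerivAt (fun u => ∫ y in K, F u y ∂μ) (∫ y in K, F' s y ∂μ) s := by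
  have : IsFiniteMeasure (μ.restrict K) := ⟨by simpa using hμ.lt_top⟩
  have cint : ∀ g : E → ℝ, ContinuousOn g K → Integrable g (μ.restrict K) := by
    intro g hg
    obtain ⟨C, hC⟩ := hK.exists_bound_of_continuousOn hg
    exact Integrable.of_bound (hg.aestronglyMeasurable_of_isCompact hK hK.measurableSet) C
      ((ae_restrict_iff' hK.measurableSet).2 (Eventually.of_forall hC))
  obtain ⟨ε, hε, hεU⟩ := Metric.isOpen_iff.1 hU s hs
  have hsub : closedBall s (ε/2) ⊆ U :=
    (closedBall_subset_ball (by linarith)).trans hεU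
  obtain ⟨C, hC⟩ := ((isCompact_closedBall s (ε/2)).prod hK).exists_bound_of_continuousOn
    (hF'.mono (prod_mono hsub Subset.rfl))
  refine (hasDerivAt_integral_of_dominated_loc_of_deriv_le (s := closedBall s (ε/2))
    (bound := fun _ => C) (closedBall_mem_nhds s (by linarith)) ?_ (cint _ (hF s hs)) ?_ ?_
    (integrable_const C) ?_).2
  · filter_upwards [hU.mem_nhds hs] with u hu
    exact (cint _ (hF u hu)).aestronglyMeasurable
  · refine (cint _ ?_).aestronglyMeasurable
    exact hF'.comp (f := fun y => (s, y)) (by fun_prop) (fun y hy => ⟨hs, hy⟩)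
  · refine (ae_restrict_iff' hK.measurableSet).2 (Eventually.of_forall fun y hy u hu => ?_)
    exact hC (u, y) ⟨hu, hy⟩
  · refine (ae_restrict_iff' hK.measurableSet).2 (Eventually.of_forall fun y hy u hu => ?_)
    exact hd u (hsub hu) y hy

theorem sphere_finite (n : ℕ) :
    μH[(n:ℝ)] (sphere (0:EuclideanSpace ℝ (Fin (n+1))) 1) ≠ ⊤ := by
  let w : Fin (n+1) → ℝ → (Fin n → ℝ) → EuclideanSpace ℝ (Fin (n+1)) :=
    fun i ε v => WithLp.toLp 2 (Fin.insertNth i ε v)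
  let g : Fin (n+1) → ℝ → (Fin n → ℝ) → EuclideanSpace ℝ (Fin (n+1)) :=
    fun i ε v => ‖w i ε v‖⁻¹ • w i ε v
  have hfin : ∀ i ε, ε ≠ 0 → μH[(n:ℝ)] (g i ε '' Icc (-1) 1) < ⊤ := by
    intro i ε hε
    have hw0 : ∀ v, w i ε v ≠ 0 := by
      intro v h
      have := congrArg (fun z : EuclideanSpace ℝ (Fin (n+1)) => z i) h
      simp [w] at this
      exact hε this
    have hw : ContDiff ℝ 1 (w i ε) := by
      refine (PiLp.contDiff_toLp (𝕜 := ℝ) (p := 2)).comp ?_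
      rw [contDiff_pi]
      intro j
      rcases Fin.eq_self_or_eq_succAbove i j with rfl | ⟨k, rfl⟩
      · simp only [Fin.insertNth_apply_same]; exact contDiff_const
      · simp only [Fin.insertNth_apply_succAbove]; exact contDiff_apply ℝ ℝ k
    have hg : ContDiff ℝ 1 (g i ε) :=
      ((hw.norm ℝ hw0).inv (fun v => norm_ne_zero_iff.2 (hw0 v))).smul hw
    obtain ⟨K, hK⟩ := (hg.locallyLipschitz.locallyLipschitzOn
      (s := Icc (-1) 1)).exists_lipschitzOnWith_of_compact isCompact_Icc
    refine (hK.hausdorffMeasure_image_le (d := (n:ℝ)) (by positivity)).trans_lt ?_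
    have h1 := hausdorffMeasure_pi_real (ι := Fin n)
    rw [Fintype.card_fin] at h1
    rw [h1]
    exact ENNReal.mul_lt_top (ENNReal.rpow_lt_top_of_nonneg (by positivity) (by simp))
      isCompact_Icc.measure_lt_top
  have hcov : sphere (0:EuclideanSpace ℝ (Fin (n+1))) 1 ⊆
      ⋃ i, (g i 1 '' Icc (-1) 1 ∪ g i (-1) '' Icc (-1) 1) := by
    intro y hy
    have hy1 : ‖y‖ = 1 := by simpa using hy
    obtain ⟨i, -, hi⟩ := Finset.exists_max_image Finset.univ (fun j => |y j|) ⟨0, Finset.mem_univ _⟩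
    have hpos : y i ≠ 0 := by
      intro h0
      have : y = 0 := by
        ext j
        have := hi j (Finset.mem_univ _)
        simp only [h0, abs_zero] at this
        simpa using this
      rw [this] at hy1; simp at hy1
    have key : ∀ c : ℝ, 0 < c → c = |y i| → y ∈ g i (c⁻¹ * y i) '' Icc (-1) 1 := by
      intro c hc hci
      refine ⟨fun k => c⁻¹ * y (i.succAbove k), ?_, ?_⟩
      · rw [mem_Icc, Pi.le_def, Pi.le_def, ← forall_and]
        intro k
        have := hi (i.succAbove k) (Finset.mem_univ _)
        rw [← hci] at this
        simp only [Pi.neg_apply, Pi.one_apply]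
        rw [← abs_le, abs_mul, abs_inv, abs_of_pos hc]
        rw [inv_mul_le_iff₀ hc]; simpa using this
      · have : w i (c⁻¹ * y i) (fun k => c⁻¹ * y (i.succAbove k)) = c⁻¹ • y := by
          ext j
          rcases Fin.eq_self_or_eq_succAbove i j with rfl | ⟨k, rfl⟩ <;> simp [w]
        simp only [g, this, norm_smul, hy1]
        rw [smul_smul]
        simp [abs_of_pos hc, hc.ne']
    rw [mem_iUnion]
    refine ⟨i, ?_⟩
    have h := key |y i| (abs_pos.2 hpos) rfl
    rcases lt_or_gt_of_ne hpos with h' | h'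
    · right
      rw [abs_of_neg h'] at h
      rwa [show (-y i)⁻¹ * y i = -1 by field_simp] at h
    · left
      rw [abs_of_pos h'] at h
      rwa [inv_mul_cancel₀ hpos] at h
  refine ((measure_mono hcov).trans_lt ?_).ne
  refine (measure_iUnion_le _).trans_lt ?_
  rw [tsum_fintype]
  refine ENNReal.sum_lt_top.2 fun i _ => ?_
  exact (measure_union_le _ _).trans_lt
    (ENNReal.add_lt_top.2 ⟨hfin i 1 one_ne_zero, hfin i (-1) (by norm_num)⟩)

theorem sphere_pos (n : ℕ) :
    μH[(n:ℝ)] (sphere (0:EuclideanSpace ℝ (Fin (n+1))) 1) ≠ 0 := by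
  intro h0
  let p : EuclideanSpace ℝ (Fin (n+1)) → (Fin n → ℝ) := fun y i => y i.succ
  have hp : LipschitzWith 1 p := by
    refine LipschitzWith.of_dist_le_mul fun x y => ?_
    rw [NNReal.coe_one, one_mul, dist_pi_le_iff dist_nonneg]
    intro i
    rw [dist_eq_norm, dist_eq_norm]
    exact PiLp.norm_apply_le (x - y) i.succ
  have h := hp.hausdorffMeasure_image_le (d := (n:ℝ)) (by positivity)
    (sphere (0:EuclideanSpace ℝ (Fin (n+1))) 1)
  have h1 := hausdorffMeasure_pi_real (ι := Fin n)
  rw [Fintype.card_fin] at h1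
  rw [h0, mul_zero, h1] at h
  let O : Set (Fin n → ℝ) := {v | ∑ i, v i ^ 2 < 1}
  have hO : IsOpen O := isOpen_lt (by fun_prop) continuous_const
  have hpos : 0 < volume O := hO.measure_pos _ ⟨0, by simp [O]⟩
  have hsub : O ⊆ p '' sphere (0:EuclideanSpace ℝ (Fin (n+1))) 1 := by
    intro v hv
    refine ⟨WithLp.toLp 2 (Fin.cons (√(1 - ∑ i, v i ^ 2)) v), ?_, ?_⟩
    · rw [mem_sphere_zero_iff_norm, EuclideanSpace.norm_eq, Fin.sum_univ_succ]
      have hv' : ∑ i, v i ^ 2 < 1 := hv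
      simp [Real.sq_sqrt (sub_nonneg.2 hv'.le)]
    · ext i; simp [p]
  exact absurd (hpos.trans_le ((measure_mono hsub).trans h)) (lt_irrefl _)

theorem sphere_scale (n : ℕ) {r : ℝ} (hr : 0 < r) :
    μH[(n:ℝ)] (sphere (0:EuclideanSpace ℝ (Fin (n+1))) r) =
      ENNReal.ofReal (r ^ n) * μH[(n:ℝ)] (sphere (0:EuclideanSpace ℝ (Fin (n+1))) 1) := by
  have h := smul_sphere' hr.ne' (0:EuclideanSpace ℝ (Fin (n+1))) 1
  rw [smul_zero, mul_one, Real.norm_of_nonneg hr.le] at h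
  rw [← h, Measure.hausdorffMeasure_smul₀ (by positivity) hr.ne', ENNReal.smul_def, smul_eq_mul]
  congr 1
  rw [NNReal.rpow_natCast, ENNReal.ofReal_pow hr.le, ENNReal.coe_pow]
  congr 1
  rw [← enorm_eq_nnnorm, Real.enorm_of_nonneg hr.le]

theorem setIntegral_isometry {N : ℕ} (d r : ℝ)
    (R : EuclideanSpace ℝ (Fin N) ≃ₗᵢ[ℝ] EuclideanSpace ℝ (Fin N))
    (W : EuclideanSpace ℝ (Fin N) → ℝ) :
    ∫ y in sphere (0:EuclideanSpace ℝ (Fin N)) r, W (R y) ∂μH[d] =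
      ∫ y in sphere (0:EuclideanSpace ℝ (Fin N)) r, W y ∂μH[d] := by
  have h := (R.toIsometryEquiv.measurePreserving_hausdorffMeasure d).setIntegral_preimage_emb
    R.toHomeomorph.measurableEmbedding W (sphere 0 r)
  have h2 : R.toIsometryEquiv ⁻¹' sphere (0:EuclideanSpace ℝ (Fin N)) r = sphere 0 r := by
    ext y; simp
  rw [h2] at h
  exact h

theorem reflection_formula {N : ℕ} {e e' : EuclideanSpace ℝ (Fin N)} (he : ‖e‖ = 1)
    (he' : ‖e'‖ = 1) (hee : inner ℝ e e' = 0) (θ : ℝ) :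
    ∃ R : EuclideanSpace ℝ (Fin N) ≃ₗᵢ[ℝ] EuclideanSpace ℝ (Fin N), ∀ y,
      inner ℝ e (R y) = inner ℝ e y * Real.cos (2*θ) + inner ℝ e' y * Real.sin (2*θ) ∧
      inner ℝ e' (R y) = inner ℝ e y * Real.sin (2*θ) - inner ℝ e' y * Real.cos (2*θ) := by
  let u := Real.cos θ • e + Real.sin θ • e'
  have h1 : inner ℝ e e = 1 := by rw [real_inner_self_eq_norm_sq, he]; norm_num
  have h2 : inner ℝ e' e' = 1 := by rw [real_inner_self_eq_norm_sq, he']; norm_num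
  have h3 : inner ℝ e' e = 0 := by rw [real_inner_comm]; exact hee
  have hsc := Real.sin_sq_add_cos_sq θ
  have hu : ‖u‖ ^ 2 = 1 := by
    rw [← real_inner_self_eq_norm_sq]
    simp only [u, inner_add_left, inner_add_right, real_inner_smul_left, real_inner_smul_right,
      h1, h2, h3, hee]
    linarith
  refine ⟨(Submodule.span ℝ {u}).reflection, fun y => ?_⟩
  rw [Submodule.reflection_singleton_apply]
  have hu' : ((‖u‖ : ℝ) : ℝ) ^ 2 = 1 := hu
  simp only [RCLike.ofReal_real_eq_id, id_eq, hu', div_one, two_smul, inner_sub_right,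
    inner_add_right]
  simp only [u, inner_add_left, inner_add_right, real_inner_smul_left, real_inner_smul_right,
      h1, h2, h3, hee]
  rw [Real.cos_two_mul, Real.sin_two_mul]
  constructor
  · ring
  · linear_combination (-2 * inner ℝ e' y) * hsc + 4 * inner ℝ e' y * hsc

theorem inner_mem_Icc {N : ℕ} {e y : EuclideanSpace ℝ (Fin N)} {r : ℝ} (he : ‖e‖ = 1)
    (hy : y ∈ sphere (0:EuclideanSpace ℝ (Fin N)) r) : inner ℝ e y ∈ Icc (-r) r := by
  have hy' : ‖y‖ = r := by simpa using hy
  have := abs_real_inner_le_norm e y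
  rw [he, hy', one_mul] at this
  exact abs_le.1 this

theorem zonal_pair {N : ℕ} {d r : ℝ}
    (hfin : μH[d] (sphere (0:EuclideanSpace ℝ (Fin N)) r) ≠ ⊤)
    {e e' : EuclideanSpace ℝ (Fin N)} (he : ‖e‖ = 1)
    (he' : ‖e'‖ = 1) (hee : inner ℝ e e' = 0) {H H' : ℝ → ℝ}
    (hH : ∀ t ∈ Icc (-r) r, HasDerivAt H (H' t) t) (hH' : ContinuousOn H' (Icc (-r) r)) :
    ∫ y in sphere (0:EuclideanSpace ℝ (Fin N)) r,
      (H' (inner ℝ e y) * inner ℝ e' y ^ 2 - inner ℝ e y * H (inner ℝ e y)) ∂μH[d] = 0 := by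
  have hHc : ContinuousOn H (Icc (-r) r) := fun t ht => (hH t ht).continuousAt.continuousWithinAt
  let A : ℝ → EuclideanSpace ℝ (Fin N) → ℝ := fun θ y =>
    inner ℝ e y * Real.cos (2*θ) + inner ℝ e' y * Real.sin (2*θ)
  let B : ℝ → EuclideanSpace ℝ (Fin N) → ℝ := fun θ y =>
    inner ℝ e y * Real.sin (2*θ) - inner ℝ e' y * Real.cos (2*θ)
  have hA : ∀ θ, ∀ y ∈ sphere (0:EuclideanSpace ℝ (Fin N)) r, A θ y ∈ Icc (-r) r := by
    intro θ y hy
    obtain ⟨R, hR⟩ := reflection_formula he he' hee θ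
    rw [show A θ y = inner ℝ e (R y) from (hR y).1.symm]
    exact inner_mem_Icc he (by simpa using hy)
  have hAc : Continuous (fun p : ℝ × EuclideanSpace ℝ (Fin N) => A p.1 p.2) := by
    simp only [A]; fun_prop
  have hBc : Continuous (fun p : ℝ × EuclideanSpace ℝ (Fin N) => B p.1 p.2) := by
    simp only [B]; fun_prop
  have hAm : MapsTo (fun p : ℝ × EuclideanSpace ℝ (Fin N) => A p.1 p.2)
    ((univ : Set ℝ) ×ˢ sphere (0:EuclideanSpace ℝ (Fin N)) r) (Icc (-r) r) :=
    fun p hp => hA p.1 p.2 hp.2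
  have hdA : ∀ θ y, HasDerivAt (fun θ => A θ y) (-2 * B θ y) θ := by
    intro θ y
    have h2 : HasDerivAt (fun θ : ℝ => 2 * θ) 2 θ := by simpa using (hasDerivAt_id θ).const_mul 2
    have := (h2.cos.const_mul (inner ℝ e y)).add (h2.sin.const_mul (inner ℝ e' y))
    refine this.congr_deriv ?_
    simp only [B]; ring
  have hdB : ∀ θ y, HasDerivAt (fun θ => B θ y) (2 * A θ y) θ := by
    intro θ y
    have h2 : HasDerivAt (fun θ : ℝ => 2 * θ) 2 θ := by simpa using (hasDerivAt_id θ).const_mul 2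
    have := (h2.sin.const_mul (inner ℝ e y)).sub (h2.cos.const_mul (inner ℝ e' y))
    refine this.congr_deriv ?_
    simp only [A]; ring
  have hderiv := hasDerivAt_setIntegral_compact (μ := μH[d])
    (isCompact_sphere (0:EuclideanSpace ℝ (Fin N)) r) hfin
    isOpen_univ (F := fun θ y => H (A θ y) * B θ y)
    (F' := fun θ y => H' (A θ y) * (-2 * B θ y) * B θ y + H (A θ y) * (2 * A θ y))
    (fun θ _ => ((hHc.comp hAc.continuousOn hAm).mul hBc.continuousOn).comp
      (f := fun y => (θ, y)) (by fun_prop) (fun y hy => ⟨mem_univ _, hy⟩))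
    (by
      refine ContinuousOn.add (ContinuousOn.mul (ContinuousOn.mul
        (hH'.comp hAc.continuousOn hAm) ?_) ?_) (ContinuousOn.mul
        (hHc.comp hAc.continuousOn hAm) ?_)
      · exact (continuous_const.mul hBc).continuousOn
      · exact hBc.continuousOn
      · exact (continuous_const.mul hAc).continuousOn)
    (fun θ _ y hy => ((hH _ (hA θ y hy)).comp θ (hdA θ y)).mul (hdB θ y)) (mem_univ (0:ℝ))
  have hconst : (fun θ => ∫ y in sphere (0:EuclideanSpace ℝ (Fin N)) r,
      H (A θ y) * B θ y ∂μH[d]) = fun _ => ∫ y in sphere (0:EuclideanSpace ℝ (Fin N)) r,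
      H (inner ℝ e y) * inner ℝ e' y ∂μH[d] := by
    funext θ
    obtain ⟨R, hR⟩ := reflection_formula he he' hee θ
    rw [← setIntegral_isometry d r R (fun y => H (inner ℝ e y) * inner ℝ e' y)]
    simp only [A, B, (hR _).1, (hR _).2]
  rw [hconst] at hderiv
  have h0 := hderiv.unique (hasDerivAt_const _ _)
  have : ∀ y, H' (A 0 y) * (-2 * B 0 y) * B 0 y + H (A 0 y) * (2 * A 0 y) =
      (-2) * (H' (inner ℝ e y) * inner ℝ e' y ^ 2 - inner ℝ e y * H (inner ℝ e y)) := by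
    intro y
    have h1 : A 0 y = inner ℝ e y := by simp [A]
    have h2 : B 0 y = - inner ℝ e' y := by simp [B]
    rw [h1, h2]; ring
  simp only [this] at h0
  rw [integral_const_mul] at h0
  linarith

theorem integrableOn_sphere {N : ℕ} {d r : ℝ}
    (hfin : μH[d] (sphere (0:EuclideanSpace ℝ (Fin N)) r) ≠ ⊤)
    {g : EuclideanSpace ℝ (Fin N) → ℝ} (hg : ContinuousOn g (sphere 0 r)) :
    IntegrableOn g (sphere 0 r) μH[d] :=
  hg.integrableOn_of_subset_isCompact (isCompact_sphere _ _) isClosed_sphere.measurableSet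
    Subset.rfl hfin

theorem zonal {N : ℕ} {d r : ℝ}
    (hfin : μH[d] (sphere (0:EuclideanSpace ℝ (Fin N)) r) ≠ ⊤)
    {e : EuclideanSpace ℝ (Fin N)} (he : ‖e‖ = 1) {H H' : ℝ → ℝ}
    (hH : ∀ t ∈ Icc (-r) r, HasDerivAt H (H' t) t) (hH' : ContinuousOn H' (Icc (-r) r)) :
    ∫ y in sphere (0:EuclideanSpace ℝ (Fin N)) r,
      (H' (inner ℝ e y) * (r ^ 2 - inner ℝ e y ^ 2)
        - (N - 1) * (inner ℝ e y * H (inner ℝ e y))) ∂μH[d] = 0 := by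
  have hHc : ContinuousOn H (Icc (-r) r) := fun t ht => (hH t ht).continuousAt.continuousWithinAt
  have hN : 0 < N := by
    rcases Nat.eq_zero_or_pos N with rfl | h
    · rw [Subsingleton.elim e 0] at he; simp at he
    · exact h
  let i0 : Fin N := ⟨0, hN⟩
  obtain ⟨b, hb⟩ := Orthonormal.exists_orthonormalBasis_extension_of_card_eq (𝕜 := ℝ)
    (E := EuclideanSpace ℝ (Fin N)) (ι := Fin N) (by simp) (v := fun _ => e) (s := {i0})
    (by
      rw [orthonormal_iff_ite]
      rintro ⟨i, rfl⟩ ⟨j, rfl⟩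
      simp [he])
  have hb0 : b i0 = e := hb i0 rfl
  have hint : ∀ j ∈ Finset.univ.erase i0, IntegrableOn (fun y =>
      (H' (inner ℝ e y) * inner ℝ (b j) y ^ 2 - inner ℝ e y * H (inner ℝ e y)))
        (sphere (0:EuclideanSpace ℝ (Fin N)) r) μH[d] := by
    intro j _
    have hm : MapsTo (fun y => inner ℝ e y) (sphere (0:EuclideanSpace ℝ (Fin N)) r) (Icc (-r) r) :=
      fun y hy => inner_mem_Icc he hy
    have hc : Continuous (fun y : EuclideanSpace ℝ (Fin N) => inner ℝ e y) := by fun_prop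
    refine integrableOn_sphere hfin (ContinuousOn.sub (ContinuousOn.mul
      (hH'.comp hc.continuousOn hm) ?_) (hc.continuousOn.mul (hHc.comp hc.continuousOn hm)))
    fun_prop
  have hsum : ∑ j ∈ Finset.univ.erase i0, ∫ y in sphere (0:EuclideanSpace ℝ (Fin N)) r,
      (H' (inner ℝ e y) * inner ℝ (b j) y ^ 2 - inner ℝ e y * H (inner ℝ e y)) ∂μH[d] = 0 := by
    refine Finset.sum_eq_zero fun j hj => ?_
    refine zonal_pair hfin he (b.norm_eq_one j) ?_ hH hH'
    rw [← hb0]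
    exact b.inner_eq_zero (Finset.ne_of_mem_erase hj).symm
  rw [← integral_finsetSum _ hint] at hsum
  rw [← hsum]
  refine setIntegral_congr_fun isClosed_sphere.measurableSet fun y hy => ?_
  have hy' : ‖y‖ = r := by simpa using hy
  have hs := b.sum_sq_inner_right y
  rw [hy', ← Finset.add_sum_erase _ _ (Finset.mem_univ i0), hb0] at hs
  simp only [Finset.sum_sub_distrib, ← Finset.mul_sum, Finset.sum_const, Finset.card_erase_of_mem
    (Finset.mem_univ i0), Finset.card_univ, Fintype.card_fin, nsmul_eq_mul]
  rw [Nat.cast_sub (by omega : 1 ≤ N), Nat.cast_one, ← hs]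
  ring

theorem potential_const (m : ℕ) {d r : ℝ} (hr : 0 < r)
    (hfin : μH[d] (sphere (0:EuclideanSpace ℝ (Fin (m+2))) r) ≠ ⊤)
    {e : EuclideanSpace ℝ (Fin (m+2))} (he : ‖e‖ = 1) {s : ℝ} (hs0 : 0 ≤ s) (hs : s < r) :
    ∫ y in sphere (0:EuclideanSpace ℝ (Fin (m+2))) r,
      (s^2 + r^2 - 2 * s * inner ℝ e y) ^ (-(m:ℝ)/2) ∂μH[d] =
    ∫ y in sphere (0:EuclideanSpace ℝ (Fin (m+2))) r, (r^2) ^ (-(m:ℝ)/2) ∂μH[d] := by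
  set S := sphere (0:EuclideanSpace ℝ (Fin (m+2))) r with hS
  set a : ℝ := -(m:ℝ)/2 with ha
  have hq : ∀ s ∈ Ioo (-r) r, ∀ t ∈ Icc (-r) r, 0 < s^2 + r^2 - 2 * s * t := by
    intro s hs t ht
    obtain ⟨h1, h2⟩ := hs
    obtain ⟨h3, h4⟩ := ht
    rcases le_total 0 s with h | h
    · nlinarith [mul_nonneg h (sub_nonneg.2 h4), mul_pos (sub_pos.2 h2) (sub_pos.2 h2)]
    · nlinarith [mul_nonneg (neg_nonneg.2 h) (by linarith : 0 ≤ t + r),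
        mul_pos (by linarith : 0 < s + r) (by linarith : 0 < s + r)]
  have hqS : ∀ s ∈ Ioo (-r) r, ∀ y ∈ S, 0 < s^2 + r^2 - 2 * s * inner ℝ e y :=
    fun s hs y hy => hq s hs _ (inner_mem_Icc he hy)
  have hcont : ∀ c : ℝ, ContinuousOn (fun p : ℝ × EuclideanSpace ℝ (Fin (m+2)) =>
      (p.1^2 + r^2 - 2 * p.1 * inner ℝ e p.2) ^ c) (Ioo (-r) r ×ˢ S) := by
    intro c
    refine ContinuousOn.rpow_const (by fun_prop) ?_
    intro p hp
    exact Or.inl (hqS p.1 hp.1 p.2 hp.2).ne'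
  have hslice : ∀ (g : ℝ × EuclideanSpace ℝ (Fin (m+2)) → ℝ),
      ContinuousOn g (Ioo (-r) r ×ˢ S) → ∀ s ∈ Ioo (-r) r, ContinuousOn (fun y => g (s, y)) S := by
    intro g hg s hs
    exact hg.comp (f := fun y => (s, y)) (by fun_prop) (fun y hy => ⟨hs, hy⟩)
  have hpow : ∀ c s, s ∈ Ioo (-r) r → ∀ y ∈ S, HasDerivAt
      (fun u : ℝ => (u^2 + r^2 - 2 * u * inner ℝ e y) ^ c)
      (2 * c * (s - inner ℝ e y) * (s^2 + r^2 - 2 * s * inner ℝ e y) ^ (c - 1)) s := by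
    intro c s hs y hy
    have h1 : HasDerivAt (fun u : ℝ => u^2 + r^2 - 2 * u * inner ℝ e y)
        (2 * s - 2 * inner ℝ e y) s := by
      have := (((hasDerivAt_id s).pow 2).add_const (r^2)).sub
        (((hasDerivAt_id s).const_mul 2).mul_const (inner ℝ e y))
      refine this.congr_deriv ?_
      simp
    refine (h1.rpow_const (p := c) (Or.inl (hqS s hs y hy).ne')).congr_deriv ?_
    ring
  have hopen : IsOpen (Ioo (-r) r) := isOpen_Ioo
  -- first derivative
  let J : ℝ → ℝ := fun s => ∫ y in S,
    2 * a * (s - inner ℝ e y) * (s^2 + r^2 - 2 * s * inner ℝ e y) ^ (a - 1) ∂μH[d]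
  have hJc : ContinuousOn (fun p : ℝ × EuclideanSpace ℝ (Fin (m+2)) =>
      2 * a * (p.1 - inner ℝ e p.2) * (p.1^2 + r^2 - 2 * p.1 * inner ℝ e p.2) ^ (a - 1))
      (Ioo (-r) r ×ˢ S) := ContinuousOn.mul (by fun_prop) (hcont _)
  have hf : ∀ s ∈ Ioo (-r) r, HasDerivAt (fun s => ∫ y in S,
      (s^2 + r^2 - 2 * s * inner ℝ e y) ^ a ∂μH[d]) (J s) s := by
    intro s hs
    exact hasDerivAt_setIntegral_compact (isCompact_sphere _ _) hfin hopen
      (fun s hs => hslice _ (hcont a) s hs) hJc (fun s hs y hy => hpow a s hs y hy) hs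
  -- second derivative
  let J2 : ℝ → EuclideanSpace ℝ (Fin (m+2)) → ℝ := fun s y =>
    2 * a * (s^2 + r^2 - 2 * s * inner ℝ e y) ^ (a - 1) + 2 * a * (s - inner ℝ e y) *
      (2 * (a - 1) * (s - inner ℝ e y) * (s^2 + r^2 - 2 * s * inner ℝ e y) ^ (a - 1 - 1))
  have hJ2c : ContinuousOn (fun p : ℝ × EuclideanSpace ℝ (Fin (m+2)) => J2 p.1 p.2)
      (Ioo (-r) r ×ˢ S) :=
    (ContinuousOn.mul (by fun_prop) (hcont _)).add (ContinuousOn.mul (by fun_prop)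
      (ContinuousOn.mul (by fun_prop) (hcont _)))
  have hJd : ∀ s ∈ Ioo (-r) r, HasDerivAt J (∫ y in S, J2 s y ∂μH[d]) s := by
    intro s hs
    refine hasDerivAt_setIntegral_compact (isCompact_sphere _ _) hfin hopen
      (fun s hs => hslice _ hJc s hs) hJ2c (fun s hs y hy => ?_) hs
    have h1 : HasDerivAt (fun u : ℝ => 2 * a * (u - inner ℝ e y)) (2 * a) s := by
      simpa using ((hasDerivAt_id s).sub_const (inner ℝ e y)).const_mul (2 * a)
    exact h1.mul (hpow (a-1) s hs y hy)
  -- the ODE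
  have hode : ∀ s ∈ Ioo (-r) r, s * (∫ y in S, J2 s y ∂μH[d]) + (m + 1) * J s = 0 := by
    intro s hs
    have hz := zonal hfin he (H := fun t => (s^2 + r^2 - 2 * s * t) ^ (a - 1))
      (H' := fun t => (-2 * s) * (a - 1) * (s^2 + r^2 - 2 * s * t) ^ (a - 1 - 1))
      (by
        intro t ht
        have h1 : HasDerivAt (fun t : ℝ => s^2 + r^2 - 2 * s * t) (-2 * s) t := by
          have := ((hasDerivAt_id t).const_mul (2 * s)).const_sub (s^2 + r^2)
          exact this.congr_deriv (by ring)
        exact h1.rpow_const (p := a - 1) (Or.inl (hq s hs t ht).ne'))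
      (by
        refine ContinuousOn.mul (by fun_prop) (ContinuousOn.rpow_const (by fun_prop) ?_)
        intro t ht
        exact Or.inl (hq s hs t ht).ne')
    have hi2 : IntegrableOn (fun y => J2 s y) S μH[d] :=
      integrableOn_sphere hfin (hslice _ hJ2c s hs)
    have hi1 := integrableOn_sphere hfin (hslice _ hJc s hs)
    simp only [J]
    rw [← integral_const_mul, ← integral_const_mul,
      ← integral_add (hi2.const_mul s) (hi1.const_mul _)]
    rw [← mul_zero (2 * a), ← hz, ← integral_const_mul]
    refine setIntegral_congr_fun isClosed_sphere.measurableSet fun y hy => ?_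
    have hpos := hqS s hs y hy
    simp only [J2]
    have hsplit : (s^2 + r^2 - 2 * s * inner ℝ e y) ^ (a - 1) =
        (s^2 + r^2 - 2 * s * inner ℝ e y) ^ (a - 1 - 1) * (s^2 + r^2 - 2 * s * inner ℝ e y) := by
      rw [← Real.rpow_add_one hpos.ne']; congr 1; ring
    rw [hsplit]
    push_cast
    have ha' : (m:ℝ) = -2 * a := by rw [ha]; ring
    rw [ha']
    ring
  have hJ0 : ∀ s ∈ Ioo (-r) r, J s = 0 := by
    have hM : ∀ s ∈ Ioo (-r) r, HasDerivAt (fun s => s ^ (m+1) * J s) 0 s := by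
      intro s hs
      have := ((hasDerivAt_pow (m+1) s)).mul (hJd s hs)
      refine this.congr_deriv ?_
      have h := hode s hs
      simp only [Nat.add_sub_cancel]
      push_cast
      linear_combination s ^ m * h
    have h00 : (0:ℝ) ∈ Ioo (-r) r := ⟨by linarith, hr⟩
    intro s hs
    rcases eq_or_ne s 0 with rfl | hne
    · have h := hode 0 h00
      rw [zero_mul, zero_add] at h
      rcases mul_eq_zero.1 h with h | h
      · exact absurd h (by positivity)
      · exact h
    · have := (convex_Ioo (-r) r).is_const_of_fderivWithin_eq_zero (𝕜 := ℝ)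
        (f := fun s => s ^ (m+1) * J s)
        (fun u hu => (hM u hu).differentiableAt.differentiableWithinAt)
        (fun u hu => by
          rw [fderivWithin_of_isOpen hopen hu]
          have := (hM u hu).hasFDerivAt.fderiv
          rw [this]; ext; simp) hs h00
      simp only [ne_eq, Nat.add_eq_zero_iff, one_ne_zero, and_false, not_false_eq_true, zero_pow,
        zero_mul] at this
      exact (mul_eq_zero.1 this).resolve_left (pow_ne_zero _ hne)
  have := (convex_Ioo (-r) r).is_const_of_fderivWithin_eq_zero (𝕜 := ℝ)
        (f := fun s => ∫ y in S, (s^2 + r^2 - 2 * s * inner ℝ e y) ^ a ∂μH[d])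
        (fun u hu => (hf u hu).differentiableAt.differentiableWithinAt)
        (fun u hu => by
          rw [fderivWithin_of_isOpen hopen hu]
          have := (hf u hu).hasFDerivAt.fderiv
          rw [this, hJ0 u hu]; ext; simp) (x := s) (y := 0) ⟨by linarith, hs⟩ ⟨by linarith, hr⟩
  simpa using this

theorem potential_value (m : ℕ) {d r : ℝ} (hr : 0 < r)
    (hfin : μH[d] (sphere (0:EuclideanSpace ℝ (Fin (m+2))) r) ≠ ⊤)
    (x : EuclideanSpace ℝ (Fin (m+2))) (hx : ‖x‖ ≠ r) :
    ∫ y in sphere (0:EuclideanSpace ℝ (Fin (m+2))) r, ‖x - y‖ ^ (-(m:ℝ)) ∂μH[d] =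
      (μH[d] (sphere (0:EuclideanSpace ℝ (Fin (m+2))) r)).toReal *
      if r < ‖x‖ then ‖x‖ ^ (-(m:ℝ)) else r ^ (-(m:ℝ)) := by
  obtain ⟨e, he, hxe⟩ : ∃ e : EuclideanSpace ℝ (Fin (m+2)), ‖e‖ = 1 ∧ x = ‖x‖ • e := by
    rcases eq_or_ne x 0 with rfl | h
    · exact ⟨EuclideanSpace.single 0 1, by simp, by simp⟩
    · refine ⟨‖x‖⁻¹ • x, ?_, ?_⟩
      · rw [norm_smul]; simp [h]
      · rw [smul_smul, mul_inv_cancel₀ (norm_ne_zero_iff.2 h), one_smul]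
  have hsq : ∀ z : ℝ, 0 ≤ z → (z^2) ^ (-(m:ℝ)/2) = z ^ (-(m:ℝ)) := by
    intro z hz
    rw [← Real.rpow_natCast, ← Real.rpow_mul hz]
    congr 1; push_cast; ring
  have hnorm : ∀ y ∈ sphere (0:EuclideanSpace ℝ (Fin (m+2))) r,
      ‖x - y‖^2 = ‖x‖^2 + r^2 - 2 * ‖x‖ * inner ℝ e y := by
    intro y hy
    have hy' : ‖y‖ = r := by simpa using hy
    have : inner ℝ x y = ‖x‖ * inner ℝ e y := by
      conv_lhs => rw [hxe]
      rw [real_inner_smul_left]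
    rw [norm_sub_sq_real, this, hy']; ring
  have hconst : ∫ y in sphere (0:EuclideanSpace ℝ (Fin (m+2))) r, (r^2) ^ (-(m:ℝ)/2) ∂μH[d]
      = (μH[d] (sphere (0:EuclideanSpace ℝ (Fin (m+2))) r)).toReal * r ^ (-(m:ℝ)) := by
    rw [setIntegral_const, smul_eq_mul, hsq r hr.le]; rfl
  split_ifs with h
  · have hx0 : 0 < ‖x‖ := hr.trans h
    have hlt : r^2 / ‖x‖ < r := by
      rw [div_lt_iff₀ hx0]; nlinarith
    have key := potential_const m hr hfin he (s := r^2/‖x‖) (by positivity) hlt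
    rw [hconst] at key
    have : ∫ y in sphere (0:EuclideanSpace ℝ (Fin (m+2))) r, ‖x - y‖ ^ (-(m:ℝ)) ∂μH[d] =
        (‖x‖ / r) ^ (-(m:ℝ)) * ∫ y in sphere (0:EuclideanSpace ℝ (Fin (m+2))) r,
          ((r^2/‖x‖)^2 + r^2 - 2 * (r^2/‖x‖) * inner ℝ e y) ^ (-(m:ℝ)/2) ∂μH[d] := by
      rw [← integral_const_mul]
      refine setIntegral_congr_fun isClosed_sphere.measurableSet fun y hy => ?_
      have h2 : (r^2/‖x‖)^2 + r^2 - 2 * (r^2/‖x‖) * inner ℝ e y = (r / ‖x‖ * ‖x - y‖)^2 := by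
        rw [mul_pow, hnorm y hy]
        field_simp
        ring
      rw [h2, hsq _ (by positivity), ← Real.mul_rpow (by positivity) (by positivity)]
      congr 1
      field_simp
    rw [this, key, mul_left_comm, ← Real.mul_rpow (by positivity) hr.le]
    congr 2
    field_simp
  · have hlt : ‖x‖ < r := lt_of_le_of_ne (not_lt.1 h) hx
    rw [← hconst, ← potential_const m hr hfin he (norm_nonneg x) hlt]
    refine setIntegral_congr_fun isClosed_sphere.measurableSet fun y hy => ?_
    rw [← hnorm y hy, hsq _ (norm_nonneg _)]

/-- Lemma 3.6: the average of the Newtonian kernel over a sphere. -/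
theorem statement_8 {N : ℕ} (hN : 3 ≤ N) (r : ℝ) (hr : 0 < r)
    (x : EuclideanSpace ℝ (Fin N)) (hx : ‖x‖ ≠ r) :
    (1 / ((μH[(N:ℝ) - 1] (sphere (0:EuclideanSpace ℝ (Fin N)) 1)).toReal * r ^ (N - 1))) *
        ∫ y in sphere (0:EuclideanSpace ℝ (Fin N)) r, ‖x - y‖ ^ ((2:ℝ) - N) ∂μH[(N:ℝ) - 1] =
      if r < ‖x‖ then ‖x‖ ^ ((2:ℝ) - N) else r ^ ((2:ℝ) - N) := by
  obtain ⟨m, rfl⟩ : ∃ m, N = m + 2 := ⟨N - 2, by omega⟩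
  have e1 : ((m + 2 : ℕ) : ℝ) - 1 = ((m + 1 : ℕ) : ℝ) := by push_cast; ring
  have e2 : (2:ℝ) - ((m + 2 : ℕ) : ℝ) = -(m:ℝ) := by push_cast; ring
  rw [e1, e2]
  have hscale := sphere_scale (m+1) hr
  have hfin1 := sphere_finite (m+1)
  have hpos1 := sphere_pos (m+1)
  have hfin : μH[((m+1:ℕ):ℝ)] (sphere (0:EuclideanSpace ℝ (Fin (m+2))) r) ≠ ⊤ := by
    rw [hscale]; exact ENNReal.mul_ne_top ENNReal.ofReal_ne_top hfin1
  rw [potential_value m hr hfin x hx, hscale, ENNReal.toReal_mul,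
    ENNReal.toReal_ofReal (by positivity)]
  have h1 : (μH[((m+1:ℕ):ℝ)] (sphere (0:EuclideanSpace ℝ (Fin (m+1+1))) 1)).toReal ≠ 0 :=
    ENNReal.toReal_ne_zero.2 ⟨hpos1, hfin1⟩
  have h2 : r ^ (m + 1) ≠ 0 := by positivity
  rw [show m + 2 - 1 = m + 1 from rfl, ← mul_assoc, mul_comm (r ^ (m+1)), one_div,
    inv_mul_cancel₀ (mul_ne_zero h1 h2), one_mul]
end

section
/- Let N ≥ 3 and let φ, f : (0,∞) → [0,∞) be continuous functions with ∫₀¹ r·φ(r) dr < ∞. Suppose u is a twice continuously differentiable, positive and bounded function on a punctured ball B_{r₁}(0) \ {0} ⊂ ℝ^N (for some r₁ > 0) satisfying −Δu(x) = φ(|x|) f(u(x)) for all x with 0 < |x| < r₁. Then there exists L > 0 such that u(x) → L as x → 0. -/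
open Metric Set MeasureTheory Filter

open Topology

/-- `h` is differentiable near `0` and its derivative has derivative `a` at `0`. -/
def HasD2 (h : ℝ → ℝ) (a : ℝ) : Prop :=
  ∃ h' : ℝ → ℝ, (∀ᶠ t in 𝓝 (0:ℝ), HasDerivAt h (h' t) t) ∧ HasDerivAt h' a 0

lemma HasD2.add {h k : ℝ → ℝ} {a b : ℝ} (hh : HasD2 h a) (hk : HasD2 k b) :
    HasD2 (fun t => h t + k t) (a + b) := by
  obtain ⟨h', h1, h2⟩ := hh
  obtain ⟨k', k1, k2⟩ := hk
  refine ⟨fun t => h' t + k' t, ?_, h2.add k2⟩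
  filter_upwards [h1, k1] with t ht kt using ht.add kt

lemma HasD2.const_mul {h : ℝ → ℝ} {a : ℝ} (c : ℝ) (hh : HasD2 h a) :
    HasD2 (fun t => c * h t) (c * a) := by
  obtain ⟨h', h1, h2⟩ := hh
  refine ⟨fun t => c * h' t, ?_, h2.const_mul c⟩
  filter_upwards [h1] with t ht using ht.const_mul c

lemma hasD2_const (c : ℝ) : HasD2 (fun _ => c) 0 :=
  ⟨fun _ => 0, Eventually.of_forall fun t => hasDerivAt_const t c, hasDerivAt_const 0 0⟩

lemma HasD2.congr {h k : ℝ → ℝ} {a : ℝ} (hh : HasD2 h a) (e : k =ᶠ[𝓝 0] h) : HasD2 k a := by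
  obtain ⟨h', h1, h2⟩ := hh
  refine ⟨h', ?_, h2⟩
  filter_upwards [h1, e.eventuallyEq_nhds] with t ht et
  exact ht.congr_of_eventuallyEq et

lemma HasD2.nonpos {h : ℝ → ℝ} {a : ℝ} (hh : HasD2 h a) (hm : IsLocalMax h 0) : a ≤ 0 := by
  obtain ⟨h', h1, h2⟩ := hh
  by_contra! ha
  have e : deriv h =ᶠ[𝓝 0] h' := by
    filter_upwards [h1] with t ht using ht.deriv
  have d2 : deriv (deriv h) 0 = a := by rw [e.deriv_eq]; exact h2.deriv
  have hmin : IsLocalMin h 0 :=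
    isLocalMin_of_deriv_deriv_pos (by rw [d2]; exact ha) hm.deriv_eq_zero
      h1.self_of_nhds.continuousAt
  have hc : h =ᶠ[𝓝 0] fun _ => h 0 := by
    filter_upwards [hm, hmin] with t a b using le_antisymm a b
  have : deriv (deriv h) 0 = 0 := by
    rw [hc.deriv.deriv_eq]; simp
  linarith

lemma hasD2_line {N : ℕ} {u : EuclideanSpace ℝ (Fin N) → ℝ} {x : EuclideanSpace ℝ (Fin N)}
    (hu : ContDiffAt ℝ 2 u x) (b : EuclideanSpace ℝ (Fin N)) :
    HasD2 (fun t => u (x + t • b)) (iteratedFDeriv ℝ 2 u x ![b, b]) := by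
  have hl : ∀ t : ℝ, HasDerivAt (fun t : ℝ => x + t • b) b t := by
    intro t
    simpa using ((hasDerivAt_id t).smul_const b).const_add x
  have hl0 : Tendsto (fun t : ℝ => x + t • b) (𝓝 0) (𝓝 x) := by
    have := (hl 0).continuousAt.tendsto
    simpa using this
  refine ⟨fun t => fderiv ℝ u (x + t • b) b, ?_, ?_⟩
  · have h1 : ∀ᶠ z in 𝓝 x, ContDiffAt ℝ 2 u z := hu.eventually (by simp)
    filter_upwards [hl0.eventually h1] with t ht
    exact (ht.differentiableAt (by norm_num)).hasFDerivAt.comp_hasDerivAt t (hl t)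
  · have h2 : DifferentiableAt ℝ (fderiv ℝ u) x :=
      (hu.fderiv_right (m := 1) (by norm_num)).differentiableAt (by norm_num)
    have h3 : HasFDerivAt (fderiv ℝ u) (fderiv ℝ (fderiv ℝ u) x) (x + (0:ℝ) • b) := by
      simpa using h2.hasFDerivAt
    have h4 := h3.comp_hasDerivAt (0:ℝ) (hl 0)
    have h5 := h4.clm_apply (hasDerivAt_const (0:ℝ) b)
    rw [iteratedFDeriv_two_apply]
    simpa using h5

lemma hasD2_radial {N : ℕ} {F F' : ℝ → ℝ} {F2 : ℝ} {x b : EuclideanSpace ℝ (Fin N)}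
    (hb : ‖b‖ = 1) (h1 : ∀ᶠ s in 𝓝 (‖x‖ ^ 2), HasDerivAt F (F' s) s)
    (h2 : HasDerivAt F' F2 (‖x‖ ^ 2)) :
    HasD2 (fun t => F (‖x + t • b‖ ^ 2)) (4 * F2 * (inner ℝ x b) ^ 2 + 2 * F' (‖x‖ ^ 2)) := by
  set a := inner ℝ x b with ha
  have e : ∀ t : ℝ, ‖x + t • b‖ ^ 2 = ‖x‖ ^ 2 + 2 * a * t + t ^ 2 := by
    intro t
    rw [norm_add_sq_real, inner_smul_right, norm_smul, hb, ← ha]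
    simp
    ring
  simp only [e]
  have hq : ∀ t : ℝ, HasDerivAt (fun t : ℝ => ‖x‖ ^ 2 + 2 * a * t + t ^ 2) (2 * a + 2 * t) t := by
    intro t
    have := (((hasDerivAt_id t).const_mul (2 * a)).const_add (‖x‖ ^ 2)).add
      ((hasDerivAt_id t).pow 2)
    refine this.congr_deriv ?_
    simp
  have hq0 : Tendsto (fun t : ℝ => ‖x‖ ^ 2 + 2 * a * t + t ^ 2) (𝓝 0) (𝓝 (‖x‖ ^ 2)) := by
    have := (hq 0).continuousAt.tendsto
    simpa using this
  refine ⟨fun t => F' (‖x‖ ^ 2 + 2 * a * t + t ^ 2) * (2 * a + 2 * t), ?_, ?_⟩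
  · filter_upwards [hq0.eventually h1] with t ht
    exact ht.comp t (hq t)
  · have h3 : HasDerivAt F' F2 (‖x‖ ^ 2 + 2 * a * 0 + 0 ^ 2) := by simpa using h2
    have h4 := h3.comp (0:ℝ) (hq 0)
    have h5 : HasDerivAt (fun t : ℝ => 2 * a + 2 * t) 2 0 := by
      simpa using ((hasDerivAt_id (0:ℝ)).const_mul 2).const_add (2 * a)
    have h6 := h4.mul h5
    refine h6.congr_deriv ?_
    simp
    ring

lemma laplacian_basis {N : ℕ} (u : EuclideanSpace ℝ (Fin N) → ℝ) (x : EuclideanSpace ℝ (Fin N))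
    (b : OrthonormalBasis (Fin N) ℝ (EuclideanSpace ℝ (Fin N))) :
    ∑ i, iteratedFDeriv ℝ 2 u x ![b i, b i] = laplacian u x := by
  have h1 := congrFun (InnerProductSpace.laplacian_eq_iteratedFDeriv_orthonormalBasis u b) x
  have h2 := congrFun (InnerProductSpace.laplacian_eq_iteratedFDeriv_orthonormalBasis u
    (EuclideanSpace.basisFun (Fin N) ℝ)) x
  rw [← h1, h2]
  simp [laplacian]

lemma exists_basis {N : ℕ} (i0 : Fin N) (n : EuclideanSpace ℝ (Fin N)) (hn : ‖n‖ = 1) :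
    ∃ b : OrthonormalBasis (Fin N) ℝ (EuclideanSpace ℝ (Fin N)), b i0 = n := by
  have ho : Orthonormal ℝ (({i0} : Set (Fin N)).domRestrict (fun _ => n)) := by
    constructor
    · intro i; simpa using hn
    · intro i j hij
      exact absurd (Subsingleton.elim i j) hij
  obtain ⟨b, hb⟩ := ho.exists_orthonormalBasis_extension_of_card_eq (by simp)
  exact ⟨b, hb i0 rfl⟩

lemma barrier (φ : ℝ → ℝ) (hφcont : ContinuousOn φ (Ioi (0:ℝ)))
    (hφnonneg : ∀ r : ℝ, 0 < r → 0 ≤ φ r)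
    (hφint : IntegrableOn (fun r : ℝ => r * φ r) (Ioo (0:ℝ) 1) volume) :
    ∃ F F1 F2 : ℝ → ℝ,
      (∀ s ∈ Ioo (0:ℝ) 1, HasDerivAt F (F1 s) s ∧ HasDerivAt F1 (F2 s) s) ∧
      (∀ s ∈ Ioo (0:ℝ) 1, F1 s ≤ 0 ∧ F s ≤ 0 ∧ 4 * s * F2 s + 6 * F1 s ≤ - φ (√s)) ∧
      Tendsto F (𝓝[>] 0) (𝓝 0) := by
  have hI1 : IntervalIntegrable (fun r : ℝ => r * φ r) volume 0 1 := by
    rw [intervalIntegrable_iff_integrableOn_Ioo_of_le zero_le_one]; exact hφint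
  have hI2 : IntervalIntegrable (fun r : ℝ => r * (r * φ r)) volume 0 1 :=
    hI1.continuousOn_mul continuous_id.continuousOn
  have sub : ∀ r ∈ Ioo (0:ℝ) 1, uIcc 0 r ⊆ uIcc (0:ℝ) 1 := by
    intro r hr
    rw [uIcc_of_le hr.1.le, uIcc_of_le zero_le_one]
    exact Icc_subset_Icc_right hr.2.le
  have hc1 : ContinuousOn (fun r : ℝ => r * φ r) (Ioi 0) := continuousOn_id.mul hφcont
  have hc2 : ContinuousOn (fun r : ℝ => r * (r * φ r)) (Ioi 0) := continuousOn_id.mul hc1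
  set S : ℝ → ℝ := fun r => ∫ t in (0:ℝ)..r, t * φ t with hS
  set P : ℝ → ℝ := fun r => ∫ t in (0:ℝ)..r, t * (t * φ t) with hP
  have dS : ∀ r ∈ Ioo (0:ℝ) 1, HasDerivAt S (r * φ r) r := by
    intro r hr
    refine intervalIntegral.integral_hasDerivAt_right (hI1.mono_set (sub r hr))
      (hc1.stronglyMeasurableAtFilter isOpen_Ioi r hr.1) (hc1.continuousAt (Ioi_mem_nhds hr.1))
  have dP : ∀ r ∈ Ioo (0:ℝ) 1, HasDerivAt P (r * (r * φ r)) r := by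
    intro r hr
    refine intervalIntegral.integral_hasDerivAt_right (hI2.mono_set (sub r hr))
      (hc2.stronglyMeasurableAtFilter isOpen_Ioi r hr.1) (hc2.continuousAt (Ioi_mem_nhds hr.1))
  have P0 : ∀ r ∈ Ioo (0:ℝ) 1, 0 ≤ P r := by
    intro r hr
    refine intervalIntegral.integral_nonneg hr.1.le ?_
    intro t ht
    rcases ht.1.eq_or_lt with h | h
    · simp [← h]
    · have := hφnonneg t h
      positivity
  have PS : ∀ r ∈ Ioo (0:ℝ) 1, P r ≤ r * S r := by
    intro r hr
    rw [hP, hS]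
    simp only
    rw [← intervalIntegral.integral_const_mul]
    refine intervalIntegral.integral_mono_on hr.1.le (hI2.mono_set (sub r hr))
      ((hI1.mono_set (sub r hr)).const_mul r) ?_
    intro t ht
    rcases ht.1.eq_or_lt with h | h
    · simp [← h]
    · have := hφnonneg t h
      have h2 : 0 ≤ t * φ t := by positivity
      exact mul_le_mul_of_nonneg_right ht.2 h2
  have sq : ∀ s ∈ Ioo (0:ℝ) 1, √s ∈ Ioo (0:ℝ) 1 := by
    intro s hs
    refine ⟨Real.sqrt_pos.2 hs.1, ?_⟩
    rw [Real.sqrt_lt' one_pos]; simpa using hs.2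
  refine ⟨fun s => P (√s) / √s - S (√s), fun s => - P (√s) / (2 * √s ^ 3),
    fun s => - φ (√s) / (4 * √s ^ 2) + 3 * P (√s) / (4 * √s ^ 5), ?_, ?_, ?_⟩
  · intro s hs
    have hr := sq s hs
    have hr0 := hr.1.ne'
    have ds := Real.hasDerivAt_sqrt hs.1.ne'
    have dPs := (dP _ hr).comp s ds
    have dSs := (dS _ hr).comp s ds
    constructor
    · have := (dPs.div ds hr0).sub dSs
      refine this.congr_deriv ?_
      simp only [Function.comp]
      field_simp
      ring
    · have := (dPs.neg).div ((ds.pow 3).const_mul 2) (by simp only [Pi.pow_apply]; positivity)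
      refine this.congr_deriv ?_
      simp only [Function.comp, Pi.neg_apply, Pi.pow_apply]
      field_simp
      push_cast
      ring
  · intro s hs
    have hr := sq s hs
    have hp := P0 _ hr
    have hps := PS _ hr
    have hr0 := hr.1
    refine ⟨?_, ?_, ?_⟩
    · simp only; rw [neg_div]; have : 0 ≤ P √s / (2 * √s ^ 3) := by positivity
      linarith
    · simp only
      rw [sub_nonpos, div_le_iff₀ hr0]; linarith
    · have e : s = √s ^ 2 := (Real.sq_sqrt hs.1.le).symm
      apply le_of_eq
      simp only
      rw [show 4 * s = 4 * √s ^ 2 by rw [← e]]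
      field_simp
      ring
  · have hSc : ContinuousWithinAt S (Icc 0 1) 0 := by
      have := intervalIntegral.continuousOn_primitive_interval' hI1 (left_mem_uIcc)
      rw [uIcc_of_le zero_le_one] at this
      exact this 0 (by simp)
    have hS0 : S 0 = 0 := by simp [hS]
    have hsq : Tendsto (fun s : ℝ => √s) (𝓝[>] 0) (𝓝[Icc 0 1] 0) := by
      rw [tendsto_nhdsWithin_iff]
      constructor
      · have := (Real.continuous_sqrt.tendsto 0)
        rw [Real.sqrt_zero] at this
        exact this.mono_left nhdsWithin_le_nhds
      · filter_upwards [Ioo_mem_nhdsGT (zero_lt_one' ℝ)] with s hs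
        exact Ioo_subset_Icc_self (sq s hs)
    have hT : Tendsto (fun s : ℝ => - S (√s)) (𝓝[>] 0) (𝓝 0) := by
      have := (hSc.tendsto.comp hsq).neg
      simpa [hS0] using this
    refine tendsto_of_tendsto_of_tendsto_of_le_of_le' hT tendsto_const_nhds ?_ ?_
    · filter_upwards [Ioo_mem_nhdsGT (zero_lt_one' ℝ)] with s hs
      have hr := sq s hs
      have hp := P0 _ hr
      have hr0 := hr.1
      have : 0 ≤ P √s / √s := by positivity
      linarith
    · filter_upwards [Ioo_mem_nhdsGT (zero_lt_one' ℝ)] with s hs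
      have hr := sq s hs
      have hps := PS _ hr
      rw [sub_nonpos, div_le_iff₀ hr.1]; linarith

lemma exists_tau (A t0 : ℝ) (ht0 : 0 < t0) : ∃ τ : ℝ, 0 < τ ∧ τ ≤ t0 ∧ Real.log (τ ^ 2) ≤ A := by
  refine ⟨min t0 (Real.exp (A / 2)), lt_min ht0 (Real.exp_pos _), min_le_left _ _, ?_⟩
  rw [Real.log_pow]
  have h : Real.log (min t0 (Real.exp (A / 2))) ≤ A / 2 := by
    rw [Real.log_le_iff_le_exp (lt_min ht0 (Real.exp_pos _))]
    exact min_le_right _ _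
  push_cast
  linarith

lemma sum_radial {N : ℕ} (b : OrthonormalBasis (Fin N) ℝ (EuclideanSpace ℝ (Fin N)))
    (x : EuclideanSpace ℝ (Fin N)) (A B : ℝ) :
    ∑ i, (4 * A * (inner ℝ x (b i)) ^ 2 + 2 * B) = 4 * ‖x‖ ^ 2 * A + 2 * N * B := by
  rw [Finset.sum_add_distrib, ← Finset.mul_sum, b.sum_sq_inner_left]
  simp
  ring

lemma hasD2_log {N : ℕ} {x b : EuclideanSpace ℝ (Fin N)} (hb : ‖b‖ = 1) (hx : 0 < ‖x‖) :
    HasD2 (fun t => Real.log (‖x + t • b‖ ^ 2))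
      (4 * (-((‖x‖ ^ 2) ^ 2)⁻¹) * (inner ℝ x b) ^ 2 + 2 * (‖x‖ ^ 2)⁻¹) := by
  have h0 : (0:ℝ) < ‖x‖ ^ 2 := by positivity
  refine hasD2_radial (F' := fun s => s⁻¹) hb ?_ (hasDerivAt_inv h0.ne')
  filter_upwards [Ioi_mem_nhds h0] with s hs
  exact Real.hasDerivAt_log (ne_of_gt hs)

lemma hasD2_sq {N : ℕ} {x b : EuclideanSpace ℝ (Fin N)} (hb : ‖b‖ = 1) :
    HasD2 (fun t => ‖x + t • b‖ ^ 2) 2 := by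
  have := hasD2_radial (F := fun s => s) (F' := fun _ => 1) (F2 := 0) (x := x) hb
    (Eventually.of_forall fun s => hasDerivAt_id s) (hasDerivAt_const _ _)
  simpa using this

lemma log_sum_pos {N : ℕ} (hN : 3 ≤ N) {r : ℝ} (hr : 0 < r) :
    0 < 4 * r ^ 2 * (-((r ^ 2) ^ 2)⁻¹) + 2 * (N:ℝ) * (r ^ 2)⁻¹ := by
  have hN' : (3:ℝ) ≤ N := by exact_mod_cast hN
  have : 4 * r ^ 2 * (-((r ^ 2) ^ 2)⁻¹) + 2 * (N:ℝ) * (r ^ 2)⁻¹ = (2 * N - 4) / r ^ 2 := by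
    field_simp
    ring
  rw [this]
  apply div_pos (by linarith) (by positivity)

lemma annulus_compact {N : ℕ} (τ ρ : ℝ) :
    IsCompact {x : EuclideanSpace ℝ (Fin N) | τ ≤ ‖x‖ ∧ ‖x‖ ≤ ρ} := by
  have : {x : EuclideanSpace ℝ (Fin N) | τ ≤ ‖x‖ ∧ ‖x‖ ≤ ρ} =
      closedBall 0 ρ ∩ {x | τ ≤ ‖x‖} := by
    ext x; simp [and_comm]
  rw [this]
  exact (isCompact_closedBall _ _).inter_right (isClosed_le continuous_const continuous_norm)

lemma annulus_line {N : ℕ} {τ ρ : ℝ} {x : EuclideanSpace ℝ (Fin N)} (h1 : τ < ‖x‖) (h2 : ‖x‖ < ρ)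
    (b : EuclideanSpace ℝ (Fin N)) :
    ∀ᶠ t in 𝓝 (0:ℝ), x + t • b ∈ {x : EuclideanSpace ℝ (Fin N) | τ ≤ ‖x‖ ∧ ‖x‖ ≤ ρ} := by
  have hc : Continuous fun t : ℝ => ‖x + t • b‖ := by fun_prop
  have ht : Tendsto (fun t : ℝ => ‖x + t • b‖) (𝓝 0) (𝓝 ‖x‖) := by
    have := hc.tendsto 0
    simpa using this
  filter_upwards [ht.eventually (Ioo_mem_nhds h1 h2)] with t h
  exact ⟨h.1.le, h.2.le⟩

lemma lower_bound {N : ℕ} (hN : 3 ≤ N) (u : EuclideanSpace ℝ (Fin N) → ℝ) (ρ : ℝ) (hρ : 0 < ρ)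
    (hρ1 : ρ < 1)
    (hC : ∀ x, 0 < ‖x‖ → ‖x‖ ≤ ρ → ContDiffAt ℝ 2 u x)
    (hpos : ∀ x, 0 < ‖x‖ → ‖x‖ ≤ ρ → 0 < u x)
    (hL : ∀ x, 0 < ‖x‖ → ‖x‖ ≤ ρ → laplacian u x ≤ 0) :
    ∃ c : ℝ, 0 < c ∧ ∀ x, 0 < ‖x‖ → ‖x‖ ≤ ρ → c ≤ u x := by
  haveI : Nonempty (Fin N) := ⟨⟨0, by omega⟩⟩
  haveI : Nontrivial (EuclideanSpace ℝ (Fin N)) := inferInstance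
  have hcu : ∀ x, 0 < ‖x‖ → ‖x‖ ≤ ρ → ContinuousAt u x := fun x h1 h2 => (hC x h1 h2).continuousAt
  obtain ⟨z, hz, hzmin⟩ := (isCompact_sphere (0 : EuclideanSpace ℝ (Fin N)) ρ).exists_isMinOn
    (NormedSpace.sphere_nonempty.2 hρ.le) (f := u) (by
      intro x hx
      have hx' : ‖x‖ = ρ := by simpa using hx
      exact (hcu x (by rw [hx']; exact hρ) hx'.le).continuousWithinAt)
  have hz' : ‖z‖ = ρ := by simpa using hz
  refine ⟨u z, hpos z (by rw [hz']; exact hρ) hz'.le, ?_⟩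
  intro x hx0 hxρ
  have key : ∀ ε > 0, - u x + ε * Real.log (‖x‖ ^ 2) ≤ - u z := by
    intro ε hε
    obtain ⟨τ, hτ0, hτx, hτl⟩ := exists_tau (- u z / ε) ‖x‖ hx0
    set K := {x : EuclideanSpace ℝ (Fin N) | τ ≤ ‖x‖ ∧ ‖x‖ ≤ ρ} with hK
    obtain ⟨p, hp, hpmax⟩ := (annulus_compact (N := N) τ ρ).exists_isMaxOn ⟨x, hτx, hxρ⟩
      (f := fun x => - u x + ε * Real.log (‖x‖ ^ 2)) (by
        intro y hy
        have hy0 : 0 < ‖y‖ := hτ0.trans_le hy.1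
        refine ContinuousAt.continuousWithinAt ?_
        have h1 := hcu y hy0 hy.2
        have h2 : ContinuousAt (fun x : EuclideanSpace ℝ (Fin N) => Real.log (‖x‖ ^ 2)) y :=
          ContinuousAt.log (by fun_prop) (by positivity)
        exact h1.neg.add (h2.const_mul ε))
    have hxp := hpmax (show x ∈ K from ⟨hτx, hxρ⟩)
    refine le_trans hxp ?_
    simp only
    have hp0 : 0 < ‖p‖ := hτ0.trans_le hp.1
    rcases hp.1.eq_or_lt with h | h1
    · rw [← h]
      have := hpos p hp0 hp.2
      have h3 : ε * Real.log (τ ^ 2) ≤ - u z := by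
        rw [le_div_iff₀ hε] at hτl
        linarith
      linarith
    rcases hp.2.eq_or_lt with h | h2
    · rw [h]
      have h3 : Real.log (ρ ^ 2) ≤ 0 := Real.log_nonpos (by positivity) (by nlinarith)
      have h4 : u z ≤ u p := hzmin (by simpa using h)
      nlinarith
    exfalso
    let b := EuclideanSpace.basisFun (Fin N) ℝ
    have hb : ∀ i, ‖b i‖ = 1 := fun i => b.orthonormal.1 i
    have hi : ∀ i, (-1) * iteratedFDeriv ℝ 2 u p ![b i, b i] +
        ε * (4 * (-((‖p‖ ^ 2) ^ 2)⁻¹) * (inner ℝ p (b i)) ^ 2 + 2 * (‖p‖ ^ 2)⁻¹) ≤ 0 := by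
      intro i
      have hd := ((hasD2_line (hC p hp0 hp.2) (b i)).const_mul (-1)).add
        ((hasD2_log (hb i) hp0).const_mul ε)
      refine hd.nonpos ?_
      filter_upwards [annulus_line h1 h2 (b i)] with t ht
      have := hpmax ht
      simp only [mem_setOf_eq] at this
      simp only [zero_smul, add_zero]
      linarith
    have hs := Finset.sum_nonpos (s := Finset.univ) (fun i _ => hi i)
    rw [Finset.sum_add_distrib, ← Finset.mul_sum, ← Finset.mul_sum, laplacian_basis,
      sum_radial] at hs
    have h5 := hL p hp0 hp.2
    have h6 := mul_pos hε (log_sum_pos hN hp0)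
    linarith
  set L := - Real.log (‖x‖ ^ 2) with hLdef
  have hL0 : 0 ≤ L := by
    have : Real.log (‖x‖ ^ 2) ≤ 0 := Real.log_nonpos (by positivity) (by nlinarith)
    linarith
  refine le_of_forall_pos_le_add ?_
  intro η hη
  have h := key (η / (L + 1)) (by positivity)
  have h2 : η / (L + 1) * L ≤ η := by
    rw [div_mul_eq_mul_div, div_le_iff₀ (by positivity)]
    nlinarith
  have h3 : Real.log (‖x‖ ^ 2) = - L := by simp [hLdef]
  rw [h3] at h
  linarith

/-- The doubled test function. -/
noncomputable def Phi {N : ℕ} (u : EuclideanSpace ℝ (Fin N) → ℝ) (H : ℝ → ℝ) (m ρ ε : ℝ)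
    (x y : EuclideanSpace ℝ (Fin N)) : ℝ :=
  u x + (-1) * u y + (-1) * H (‖x‖ ^ 2) + (-m) * ‖x‖ ^ 2 + (-m) * ‖y‖ ^ 2
    + (-(m * N / 2)) * (4 * ρ * ‖x - y‖ - ‖x - y‖ ^ 2)
    + ε * Real.log (‖x‖ ^ 2) + ε * Real.log (‖y‖ ^ 2)

lemma hasD2_refl {N : ℕ} {x y n : EuclideanSpace ℝ (Fin N)} (ρ : ℝ) (hd : 0 < ‖x - y‖)
    (hn : x - y = ‖x - y‖ • n) (hn1 : ‖n‖ = 1) :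
    HasD2 (fun t => 4 * ρ * ‖x + t • n - (y + t • ((-1:ℝ) • n))‖
      - ‖x + t • n - (y + t • ((-1:ℝ) • n))‖ ^ 2) (-8) := by
  set d := ‖x - y‖ with hdd
  have e : ∀ᶠ t in 𝓝 (0:ℝ), ‖x + t • n - (y + t • ((-1:ℝ) • n))‖ = d + 2 * t := by
    filter_upwards [Ioi_mem_nhds (show -(d / 2) < 0 by linarith)] with t ht
    have h1 : x + t • n - (y + t • ((-1:ℝ) • n)) = (d + 2 * t) • n := by
      have : x + t • n - (y + t • ((-1:ℝ) • n)) = (x - y) + (2 * t) • n := by module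
      rw [this, hn]; module
    have ht' : -(d / 2) < t := ht
    rw [h1, norm_smul, hn1, mul_one, Real.norm_of_nonneg (by linarith)]
  have h : HasD2 (fun t => 4 * ρ * (d + 2 * t) - (d + 2 * t) ^ 2) (-8) := by
    have hl : ∀ t : ℝ, HasDerivAt (fun t : ℝ => d + 2 * t) 2 t := by
      intro t
      simpa using ((hasDerivAt_id t).const_mul 2).const_add d
    refine ⟨fun t => 8 * ρ - 4 * (d + 2 * t), Eventually.of_forall fun t => ?_, ?_⟩
    · refine (((hl t).const_mul (4 * ρ)).sub ((hl t).pow 2)).congr_deriv ?_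
      simp
      ring
    · refine (((hl 0).const_mul 4).const_sub (8 * ρ)).congr_deriv ?_
      norm_num
  refine h.congr ?_
  filter_upwards [e] with t ht
  rw [ht]

lemma iter_neg {N : ℕ} {u : EuclideanSpace ℝ (Fin N) → ℝ} {x b : EuclideanSpace ℝ (Fin N)}
    {σ : ℝ} (hσ : σ * σ = 1) :
    iteratedFDeriv ℝ 2 u x ![σ • b, σ • b] = iteratedFDeriv ℝ 2 u x ![b, b] := by
  rw [iteratedFDeriv_two_apply, iteratedFDeriv_two_apply]
  simp [← mul_assoc, hσ]

lemma no_interior_max {N : ℕ} (hN : 3 ≤ N) (u : EuclideanSpace ℝ (Fin N) → ℝ)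
    (H H1 : ℝ → ℝ) (H2 m ρ τ ε : ℝ) (hε : 0 < ε) (hτ : 0 < τ)
    {x y : EuclideanSpace ℝ (Fin N)} (hx1 : τ < ‖x‖) (hx2 : ‖x‖ < ρ) (hy1 : τ < ‖y‖)
    (hy2 : ‖y‖ < ρ) (hxy : x ≠ y) (hux : ContDiffAt ℝ 2 u x) (huy : ContDiffAt ℝ 2 u y)
    (hLy : laplacian u y ≤ 0)
    (hLx : 4 * ‖x‖ ^ 2 * H2 + 2 * N * H1 (‖x‖ ^ 2) ≤ laplacian u x)
    (hH : ∀ᶠ s in 𝓝 (‖x‖ ^ 2), HasDerivAt H (H1 s) s) (hH1 : HasDerivAt H1 H2 (‖x‖ ^ 2))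
    (hmax : ∀ x' y', τ ≤ ‖x'‖ → ‖x'‖ ≤ ρ → τ ≤ ‖y'‖ → ‖y'‖ ≤ ρ →
      Phi u H m ρ ε x' y' ≤ Phi u H m ρ ε x y) : False := by
  have hd : 0 < ‖x - y‖ := norm_pos_iff.2 (sub_ne_zero.2 hxy)
  let i0 : Fin N := ⟨0, by omega⟩
  have hn1 : ‖(‖x - y‖⁻¹ : ℝ) • (x - y)‖ = 1 := by
    rw [norm_smul, norm_inv, norm_norm, inv_mul_cancel₀ hd.ne']
  obtain ⟨b, hbn⟩ := exists_basis i0 _ hn1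
  have hb : ∀ i, ‖b i‖ = 1 := fun i => b.orthonormal.1 i
  have hx0 := hτ.trans hx1
  have hy0 := hτ.trans hy1
  let σ : Fin N → ℝ := fun i => if i = i0 then -1 else 1
  have hσ : ∀ i, σ i * σ i = 1 := by
    intro i; simp only [σ]; split_ifs <;> norm_num
  have hσb : ∀ i, ‖σ i • b i‖ = 1 := by
    intro i
    rw [norm_smul, hb, mul_one]
    simp only [σ]; split_ifs <;> norm_num
  have hg : ∀ i, HasD2 (fun t => 4 * ρ * ‖x + t • b i - (y + t • (σ i • b i))‖
      - ‖x + t • b i - (y + t • (σ i • b i))‖ ^ 2) (if i = i0 then -8 else 0) := by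
    intro i
    by_cases hi : i = i0
    · simp only [σ, if_pos hi]
      rw [hi]
      refine hasD2_refl ρ hd ?_ (hb i0)
      rw [hbn, smul_smul, mul_inv_cancel₀ hd.ne', one_smul]
    · simp only [σ, if_neg hi]
      have : ∀ t : ℝ, x + t • b i - (y + t • ((1:ℝ) • b i)) = x - y := by
        intro t; module
      simp only [this]
      exact hasD2_const _
  have hi : ∀ i, iteratedFDeriv ℝ 2 u x ![b i, b i]
      + (-1) * iteratedFDeriv ℝ 2 u y ![b i, b i]
      + (-1) * (4 * H2 * (inner ℝ x (b i)) ^ 2 + 2 * H1 (‖x‖ ^ 2))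
      + (-m) * 2 + (-m) * 2 + (-(m * N / 2)) * (if i = i0 then -8 else 0)
      + ε * (4 * (-((‖x‖ ^ 2) ^ 2)⁻¹) * (inner ℝ x (b i)) ^ 2 + 2 * (‖x‖ ^ 2)⁻¹)
      + ε * (4 * (-((‖y‖ ^ 2) ^ 2)⁻¹) * (inner ℝ y (b i)) ^ 2 + 2 * (‖y‖ ^ 2)⁻¹) ≤ 0 := by
    intro i
    have hu2 := hasD2_line huy (σ i • b i)
    rw [iter_neg (hσ i)] at hu2
    have hlog := hasD2_log (hσb i) hy0
    rw [inner_smul_right, mul_pow, show σ i ^ 2 = 1 by rw [sq, hσ], one_mul] at hlog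
    have hd := (((((((hasD2_line hux (b i)).add (hu2.const_mul (-1))).add
      ((hasD2_radial (hb i) hH hH1).const_mul (-1))).add
      ((hasD2_sq (x := x) (hb i)).const_mul (-m))).add
      ((hasD2_sq (x := y) (hσb i)).const_mul (-m))).add
      ((hg i).const_mul (-(m * N / 2)))).add
      ((hasD2_log (hb i) hx0).const_mul ε)).add (hlog.const_mul ε)
    refine hd.nonpos ?_
    filter_upwards [annulus_line hx1 hx2 (b i), annulus_line hy1 hy2 (σ i • b i)] with t ht ht'
    have := hmax _ _ ht.1 ht.2 ht'.1 ht'.2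
    simpa only [Phi, zero_smul, add_zero] using this
  have hc : ∑ i : Fin N, ((-m) * 2 : ℝ) = N * ((-m) * 2) := by simp
  have hc2 : ∑ i : Fin N, (-(m * N / 2)) * (if i = i0 then (-8:ℝ) else 0) = 4 * m * N := by
    rw [← Finset.mul_sum]
    simp
    ring
  have hsum : laplacian u x + (-1) * laplacian u y
      + (-1) * (4 * ‖x‖ ^ 2 * H2 + 2 * N * H1 (‖x‖ ^ 2))
      + N * ((-m) * 2) + N * ((-m) * 2) + 4 * m * N
      + ε * (4 * ‖x‖ ^ 2 * (-((‖x‖ ^ 2) ^ 2)⁻¹) + 2 * N * (‖x‖ ^ 2)⁻¹)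
      + ε * (4 * ‖y‖ ^ 2 * (-((‖y‖ ^ 2) ^ 2)⁻¹) + 2 * N * (‖y‖ ^ 2)⁻¹) ≤ 0 := by
    rw [← laplacian_basis u x b, ← laplacian_basis u y b, ← sum_radial b, ← sum_radial b,
      ← sum_radial b, ← hc, ← hc2, Finset.mul_sum, Finset.mul_sum, Finset.mul_sum, Finset.mul_sum]
    simp only [← Finset.sum_add_distrib]
    exact Finset.sum_nonpos (fun i _ => hi i)
  have h5 := mul_pos hε (log_sum_pos hN hx0)
  have h6 := mul_pos hε (log_sum_pos hN hy0)
  linarith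

lemma two_point {N : ℕ} (hN : 3 ≤ N) (u : EuclideanSpace ℝ (Fin N) → ℝ)
    (H H1 H2 : ℝ → ℝ) (ρ M δ : ℝ) (hρ : 0 < ρ) (hρ1 : ρ < 1) (hM : 0 < M)
    (hC : ∀ x, 0 < ‖x‖ → ‖x‖ ≤ ρ → ContDiffAt ℝ 2 u x)
    (hpos : ∀ x, 0 < ‖x‖ → ‖x‖ ≤ ρ → 0 < u x ∧ u x ≤ M)
    (hL : ∀ x, 0 < ‖x‖ → ‖x‖ ≤ ρ → laplacian u x ≤ 0 ∧
      4 * ‖x‖ ^ 2 * H2 (‖x‖ ^ 2) + 2 * N * H1 (‖x‖ ^ 2) ≤ laplacian u x)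
    (hH : ∀ s ∈ Ioo (0:ℝ) 1, HasDerivAt H (H1 s) s ∧ HasDerivAt H1 (H2 s) s)
    (hHδ : ∀ s, 0 < s → s ≤ ρ ^ 2 → H s ≤ 0 ∧ - H s ≤ δ) (x y : EuclideanSpace ℝ (Fin N))
    (hx0 : 0 < ‖x‖) (hxρ : ‖x‖ ≤ ρ) (hy0 : 0 < ‖y‖) (hyρ : ‖y‖ ≤ ρ) :
    u x - u y ≤ δ + M / ρ ^ 2 *
      (‖x‖ ^ 2 + ‖y‖ ^ 2 + N / 2 * (4 * ρ * ‖x - y‖ - ‖x - y‖ ^ 2)) := by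
  set m := M / ρ ^ 2 with hm
  have hm0 : 0 < m := by positivity
  have hmρ : m * ρ ^ 2 = M := by rw [hm]; field_simp
  have sq01 : ∀ z : EuclideanSpace ℝ (Fin N), 0 < ‖z‖ → ‖z‖ ≤ ρ →
      ‖z‖ ^ 2 ∈ Ioo (0:ℝ) 1 ∧ ‖z‖ ^ 2 ≤ ρ ^ 2 := by
    intro z h1 h2
    refine ⟨⟨by positivity, by nlinarith⟩, by nlinarith⟩
  have logneg : ∀ z : EuclideanSpace ℝ (Fin N), 0 < ‖z‖ → ‖z‖ ≤ ρ → Real.log (‖z‖ ^ 2) ≤ 0 :=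
    fun z h1 h2 => Real.log_nonpos (by positivity) (sq01 z h1 h2).1.2.le
  have gpos : ∀ z w : EuclideanSpace ℝ (Fin N), ‖z‖ ≤ ρ → ‖w‖ ≤ ρ →
      0 ≤ m * N / 2 * (4 * ρ * ‖z - w‖ - ‖z - w‖ ^ 2) := by
    intro z w hz hw
    have h1 := norm_sub_le z w
    have h2 := norm_nonneg (z - w)
    have h3 : 0 ≤ 4 * ρ * ‖z - w‖ - ‖z - w‖ ^ 2 := by nlinarith
    positivity
  have key : ∀ ε > 0, Phi u H m ρ ε x y ≤ δ := by
    intro ε hε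
    obtain ⟨τ, hτ0, hτx, hτl⟩ := exists_tau (- M / ε) (min ‖x‖ ‖y‖) (lt_min hx0 hy0)
    have hτl' : ε * Real.log (τ ^ 2) ≤ - M := by
      rw [le_div_iff₀ hε] at hτl
      linarith
    set K := {x : EuclideanSpace ℝ (Fin N) | τ ≤ ‖x‖ ∧ ‖x‖ ≤ ρ} with hK
    have hxK : x ∈ K := ⟨hτx.trans (min_le_left _ _), hxρ⟩
    have hyK : y ∈ K := ⟨hτx.trans (min_le_right _ _), hyρ⟩
    obtain ⟨⟨p, q⟩, hpq, hmax⟩ := ((annulus_compact (N := N) τ ρ).prod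
      (annulus_compact (N := N) τ ρ)).exists_isMaxOn ⟨(x, y), hxK, hyK⟩
      (f := fun z => Phi u H m ρ ε z.1 z.2) (by
        rintro ⟨z, w⟩ ⟨hz, hw⟩
        have hz0 : 0 < ‖z‖ := hτ0.trans_le hz.1
        have hw0 : 0 < ‖w‖ := hτ0.trans_le hw.1
        refine ContinuousAt.continuousWithinAt ?_
        have c1 : ContinuousAt (fun a : EuclideanSpace ℝ (Fin N) × EuclideanSpace ℝ (Fin N) =>
          u a.1) (z, w) := ContinuousAt.comp (f := Prod.fst) (hC z hz0 hz.2).continuousAt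
            continuousAt_fst
        have c2 : ContinuousAt (fun a : EuclideanSpace ℝ (Fin N) × EuclideanSpace ℝ (Fin N) =>
          u a.2) (z, w) := ContinuousAt.comp (f := Prod.snd) (hC w hw0 hw.2).continuousAt
            continuousAt_snd
        have c3 : ContinuousAt (fun a : EuclideanSpace ℝ (Fin N) × EuclideanSpace ℝ (Fin N) =>
          H (‖a.1‖ ^ 2)) (z, w) := ContinuousAt.comp
            (f := fun a : EuclideanSpace ℝ (Fin N) × EuclideanSpace ℝ (Fin N) => ‖a.1‖ ^ 2)
            (hH _ (sq01 z hz0 hz.2).1).1.continuousAt (by fun_prop)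
        have c4 : ContinuousAt (fun a : EuclideanSpace ℝ (Fin N) × EuclideanSpace ℝ (Fin N) =>
          Real.log (‖a.1‖ ^ 2)) (z, w) := ContinuousAt.log (by fun_prop)
            (by simp only; positivity)
        have c5 : ContinuousAt (fun a : EuclideanSpace ℝ (Fin N) × EuclideanSpace ℝ (Fin N) =>
          Real.log (‖a.2‖ ^ 2)) (z, w) := ContinuousAt.log (by fun_prop)
            (by simp only; positivity)
        unfold Phi
        refine ((((((c1.add (c2.const_mul (-1))).add (c3.const_mul (-1))).add ?_).add ?_).add
          ?_).add (c4.const_mul ε)).add (c5.const_mul ε)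
        all_goals fun_prop)
    obtain ⟨hp, hq⟩ := hpq
    have hxp : Phi u H m ρ ε x y ≤ Phi u H m ρ ε p q := hmax (show (x, y) ∈ K ×ˢ K from ⟨hxK, hyK⟩)
    refine le_trans hxp ?_
    simp only at hp hq
    have hp0 : 0 < ‖p‖ := hτ0.trans_le hp.1
    have hq0 : 0 < ‖q‖ := hτ0.trans_le hq.1
    have hup := hpos p hp0 hp.2
    have huq := hpos q hq0 hq.2
    have hlp := mul_nonpos_of_nonneg_of_nonpos hε.le (logneg p hp0 hp.2)
    have hlq := mul_nonpos_of_nonneg_of_nonpos hε.le (logneg q hq0 hq.2)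
    have hHp := hHδ (‖p‖ ^ 2) (by positivity) (sq01 p hp0 hp.2).2
    have hg := gpos p q hp.2 hq.2
    have hmp : 0 ≤ m * ‖p‖ ^ 2 := by positivity
    have hmq : 0 ≤ m * ‖q‖ ^ 2 := by positivity
    rcases hp.1.eq_or_lt with h | hp1
    · rw [← h] at hlp
      unfold Phi
      rw [← h] at hHp hmp ⊢
      linarith
    rcases hq.1.eq_or_lt with h | hq1
    · unfold Phi
      rw [← h] at hmq ⊢
      linarith
    rcases hp.2.eq_or_lt with h | hp2
    · unfold Phi
      rw [h] at hHp hlp ⊢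
      linarith
    rcases hq.2.eq_or_lt with h | hq2
    · unfold Phi
      rw [h] at hlq ⊢
      linarith
    by_cases hne : p = q
    · subst hne
      unfold Phi
      simp only [sub_self, norm_zero]
      linarith
    exfalso
    have hs := sq01 p hp0 hp.2
    refine no_interior_max hN u H H1 (H2 (‖p‖ ^ 2)) m ρ τ ε hε hτ0 hp1 hp2 hq1 hq2 hne
      (hC p hp0 hp.2) (hC q hq0 hq.2) (hL q hq0 hq.2).1 (hL p hp0 hp.2).2 ?_ (hH _ hs.1).2 ?_
    · filter_upwards [Ioo_mem_nhds hs.1.1 hs.1.2] with s hs using (hH s hs).1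
    · intro x' y' h1 h2 h3 h4
      exact hmax (show (x', y') ∈ K ×ˢ K from ⟨⟨h1, h2⟩, ⟨h3, h4⟩⟩)
  set L := - (Real.log (‖x‖ ^ 2) + Real.log (‖y‖ ^ 2)) with hLdef
  have hL0 : 0 ≤ L := by
    have := logneg x hx0 hxρ
    have := logneg y hy0 hyρ
    linarith
  have hHx := (hHδ (‖x‖ ^ 2) (by positivity) (sq01 x hx0 hxρ).2).1
  refine le_of_forall_pos_le_add ?_
  intro η hη
  have h := key (η / (L + 1)) (by positivity)
  have h2 : η / (L + 1) * L ≤ η := by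
    rw [div_mul_eq_mul_div, div_le_iff₀ (by positivity)]
    nlinarith
  have h3 : η / (L + 1) * Real.log (‖x‖ ^ 2) + η / (L + 1) * Real.log (‖y‖ ^ 2)
      = - (η / (L + 1) * L) := by
    rw [hLdef]; ring
  unfold Phi at h
  nlinarith

/-- Lemma 3.8: a bounded positive solution in a punctured ball has a positive limit
at the puncture. -/
theorem statement_10 {N : ℕ} (hN : 3 ≤ N) (φ f : ℝ → ℝ)
    (hφcont : ContinuousOn φ (Ioi (0:ℝ))) (hφnonneg : ∀ r : ℝ, 0 < r → 0 ≤ φ r)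
    (hfcont : ContinuousOn f (Ioi (0:ℝ))) (hfnonneg : ∀ t : ℝ, 0 < t → 0 ≤ f t)
    (hφint : IntegrableOn (fun r : ℝ => r * φ r) (Ioo (0:ℝ) 1) volume)
    (r₁ : ℝ) (hr₁ : 0 < r₁) (u : EuclideanSpace ℝ (Fin N) → ℝ)
    (hu : ContDiffOn ℝ 2 u (ball (0:EuclideanSpace ℝ (Fin N)) r₁ \ {0}))
    (hbdd : ∃ M : ℝ, ∀ x ∈ ball (0:EuclideanSpace ℝ (Fin N)) r₁ \ {0}, u x ≤ M)
    (hsol : ∀ x ∈ ball (0:EuclideanSpace ℝ (Fin N)) r₁ \ {0},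
      0 < u x ∧ -laplacian u x = φ ‖x‖ * f (u x)) :
    ∃ L : ℝ, 0 < L ∧ Tendsto u (nhdsWithin (0:EuclideanSpace ℝ (Fin N)) {0}ᶜ) (nhds L) := by
  have hne : Nonempty (Fin N) := ⟨⟨0, by omega⟩⟩
  have hnt : Nontrivial (EuclideanSpace ℝ (Fin N)) := inferInstance
  have hN' : (3:ℝ) ≤ N := by exact_mod_cast hN
  obtain ⟨M₀, hM₀⟩ := hbdd
  set M := max M₀ 1 with hMdef
  have hM : 0 < M := lt_of_lt_of_le one_pos (le_max_right _ _)
  set R := min (r₁ / 2) (1 / 2) with hR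
  have hR0 : 0 < R := by positivity
  have hR1 : R < 1 := lt_of_le_of_lt (min_le_right _ _) (by norm_num)
  have hRr : R < r₁ := lt_of_le_of_lt (min_le_left _ _) (by linarith)
  have mem : ∀ x : EuclideanSpace ℝ (Fin N), 0 < ‖x‖ → ‖x‖ ≤ R → x ∈ ball 0 r₁ \ {0} := by
    intro x h1 h2
    refine ⟨by simpa using h2.trans_lt hRr, ?_⟩
    simpa using norm_pos_iff.1 h1
  have hC : ∀ x, 0 < ‖x‖ → ‖x‖ ≤ R → ContDiffAt ℝ 2 u x := by
    intro x h1 h2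
    exact hu.contDiffAt ((isOpen_ball.sdiff isClosed_singleton).mem_nhds (mem x h1 h2))
  have hpos : ∀ x, 0 < ‖x‖ → ‖x‖ ≤ R → 0 < u x ∧ u x ≤ M := fun x h1 h2 =>
    ⟨(hsol x (mem x h1 h2)).1, (hM₀ x (mem x h1 h2)).trans (le_max_left _ _)⟩
  have hLap : ∀ x, 0 < ‖x‖ → ‖x‖ ≤ R → laplacian u x ≤ 0 := by
    intro x h1 h2
    obtain ⟨h3, h4⟩ := hsol x (mem x h1 h2)
    have := mul_nonneg (hφnonneg _ h1) (hfnonneg _ h3)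
    linarith
  obtain ⟨c, hc0, hc⟩ := lower_bound hN u R hR0 hR1 hC (fun x h1 h2 => (hpos x h1 h2).1) hLap
  obtain ⟨K₀, hK₀⟩ := (isCompact_Icc (a := c) (b := M)).bddAbove_image
    (hfcont.mono (fun t ht => lt_of_lt_of_le hc0 ht.1))
  set K := max K₀ 1 with hKdef
  have hK0 : 0 < K := lt_of_lt_of_le one_pos (le_max_right _ _)
  have hfK : ∀ x, 0 < ‖x‖ → ‖x‖ ≤ R → f (u x) ≤ K := by
    intro x h1 h2
    exact (hK₀ ⟨u x, ⟨hc x h1 h2, (hpos x h1 h2).2⟩, rfl⟩).trans (le_max_left _ _)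
  obtain ⟨F, F1, F2, hF, hFs, hF0⟩ := barrier φ hφcont hφnonneg hφint
  have est : ∀ η > 0, ∃ r > 0, ∀ x y : EuclideanSpace ℝ (Fin N), 0 < ‖x‖ → ‖x‖ < r →
      0 < ‖y‖ → ‖y‖ < r → u x - u y < η := by
    intro η hη
    have hev : ∀ᶠ s in 𝓝[>] (0:ℝ), - (η / (2 * K)) < F s :=
      hF0.eventually (lt_mem_nhds (by simp only [neg_lt_zero]; positivity))
    obtain ⟨s0, hs0, hs0F⟩ := mem_nhdsGT_iff_exists_Ioo_subset.1 hev
    have hs0' : 0 < s0 := hs0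
    set ρ := min R (min (s0 / 2) (1/2)) with hρdef
    have hρ : 0 < ρ := by positivity
    have hρR : ρ ≤ R := min_le_left _ _
    have hρs : ρ ^ 2 < s0 := by
      have h1 : ρ ≤ s0 / 2 := (min_le_right _ _).trans (min_le_left _ _)
      have h2 : ρ ≤ 1 / 2 := (min_le_right _ _).trans (min_le_right _ _)
      nlinarith
    have tp := two_point hN u (fun s => K * F s) (fun s => K * F1 s) (fun s => K * F2 s) ρ M
      (η / 2) hρ (hρR.trans_lt hR1) hM (fun x h1 h2 => hC x h1 (h2.trans hρR))
      (fun x h1 h2 => hpos x h1 (h2.trans hρR)) ?_ ?_ ?_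
    · have hcont : Continuous fun r : ℝ => M / ρ ^ 2 *
          (r ^ 2 + r ^ 2 + N / 2 * (4 * ρ * (2 * r))) := by fun_prop
      have ht : Tendsto (fun r : ℝ => M / ρ ^ 2 *
          (r ^ 2 + r ^ 2 + N / 2 * (4 * ρ * (2 * r)))) (𝓝[>] 0) (𝓝 0) := by
        have := hcont.tendsto 0
        simp only [ne_eq, OfNat.ofNat_ne_zero, not_false_eq_true, zero_pow, mul_zero,
          add_zero] at this
        exact this.mono_left nhdsWithin_le_nhds
      obtain ⟨r, hr, hrρ⟩ := ((ht.eventually (gt_mem_nhds (half_pos hη))).and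
        (Ioo_mem_nhdsGT hρ)).exists
      refine ⟨r, hrρ.1, ?_⟩
      intro x y hx0 hxr hy0 hyr
      have h := tp x y hx0 (hxr.trans hrρ.2).le hy0 (hyr.trans hrρ.2).le
      have hle : M / ρ ^ 2 *
          (‖x‖ ^ 2 + ‖y‖ ^ 2 + N / 2 * (4 * ρ * ‖x - y‖ - ‖x - y‖ ^ 2)) ≤
          M / ρ ^ 2 * (r ^ 2 + r ^ 2 + N / 2 * (4 * ρ * (2 * r))) := by
        have h1 : ‖x - y‖ ≤ 2 * r := (norm_sub_le x y).trans (by linarith)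
        have h2 : 4 * ρ * ‖x - y‖ - ‖x - y‖ ^ 2 ≤ 4 * ρ * (2 * r) := by
          nlinarith [sq_nonneg ‖x - y‖]
        gcongr
      linarith
    · intro x h1 h2
      have h2' := h2.trans hρR
      refine ⟨hLap x h1 h2', ?_⟩
      have hs : ‖x‖ ^ 2 ∈ Ioo (0:ℝ) 1 := ⟨by positivity, by nlinarith⟩
      obtain ⟨a1, a2, a3⟩ := hFs _ hs
      rw [Real.sqrt_sq h1.le] at a3
      have h4 := (hsol x (mem x h1 h2')).2
      have h5 := mul_le_mul_of_nonneg_left (hfK x h1 h2') (hφnonneg _ h1)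
      have h6 : 2 * N * F1 (‖x‖ ^ 2) ≤ 6 * F1 (‖x‖ ^ 2) := by nlinarith
      have h7 : 4 * ‖x‖ ^ 2 * F2 (‖x‖ ^ 2) + 2 * N * F1 (‖x‖ ^ 2) ≤ - φ ‖x‖ := by linarith
      have h8 := mul_le_mul_of_nonneg_left h7 hK0.le
      linarith
    · intro s hs
      exact ⟨(hF s hs).1.const_mul K, (hF s hs).2.const_mul K⟩
    · intro s hs hsρ
      have hs1 : s ∈ Ioo (0:ℝ) 1 := ⟨hs, by nlinarith⟩
      have h1 := (hFs s hs1).2.1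
      have h2 : - (η / (2 * K)) < F s := hs0F ⟨hs, hsρ.trans_lt hρs⟩
      refine ⟨by nlinarith, ?_⟩
      have h3 := mul_lt_mul_of_pos_left h2 hK0
      have h4 : K * -(η / (2 * K)) = - (η / 2) := by field_simp
      linarith
  have hmemr : ∀ r > 0, ∀ᶠ x in 𝓝[≠] (0 : EuclideanSpace ℝ (Fin N)), 0 < ‖x‖ ∧ ‖x‖ < r := by
    intro r hr
    filter_upwards [self_mem_nhdsWithin, mem_nhdsWithin_of_mem_nhds (ball_mem_nhds _ hr)]
      with x h1 h2
    exact ⟨norm_pos_iff.2 h1, by simpa using h2⟩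
  have hcauchy : Cauchy (map u (𝓝[≠] (0 : EuclideanSpace ℝ (Fin N)))) := by
    rw [Metric.cauchy_iff]
    refine ⟨inferInstance, ?_⟩
    intro η hη
    obtain ⟨r, hr, h⟩ := est η hη
    refine ⟨_, image_mem_map (hmemr r hr), ?_⟩
    rintro _ ⟨x, hx, rfl⟩ _ ⟨y, hy, rfl⟩
    rw [Real.dist_eq, abs_lt]
    have h1 := h x y hx.1 hx.2 hy.1 hy.2
    have h2 := h y x hy.1 hy.2 hx.1 hx.2
    constructor <;> linarith
  obtain ⟨L, hL⟩ := CompleteSpace.complete hcauchy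
  refine ⟨L, ?_, hL⟩
  have hcL : c ≤ L := by
    refine ge_of_tendsto (show Tendsto u (𝓝[≠] 0) (𝓝 L) from hL) ?_
    filter_upwards [hmemr R hR0] with x hx using hc x hx.1 hx.2.le
  linarith
end
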